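/- arXiv:1108.6218 — 8 statements merged into one kernel-verified Lean document; each statement's English description precedes it below -/
import Mathlib

section
/- Suppose α = r + sω + tω² with r, s, t ∈ ℚ satisfies α² = a − ω for some a ∈ ℚ. Then t ≠ 0, r = −s²/(2t), and the pair (x, y) = (s/t, 1/t) satisfies y² = x³ − m; that is, (s/t, 1/t) is an affine rational point on the elliptic curve E_m : y² = x³ − m. -/
/-!
If `c` is not a cube in `F`, then `X ^ 3 - c` is irreducible over `F`, so `1, ω, ω ^ 2` are linearly
independent. Comparing the coefficients of `ω ^ 2` and `ω` in `α ^ 2 = a - ω` gives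
`s ^ 2 + 2 * r * t = 0` and `2 * r * s + c * t ^ 2 = -1`; eliminating `r` leaves
`t = s ^ 3 - c * t ^ 3`, which is the equation of the curve multiplied by `t ^ 3`. For `F = ℚ` and
an integer `c = m`, being a cube in `ℚ` is the same as being a cube in `ℤ`, since `ℤ` is integrally
closed.
-/

theorem exists_pow_eq_of_pow_eq_algebraMap {R K : Type*} [CommRing R]
    [IsIntegrallyClosed R] [CommRing K] [Algebra R K] [IsFractionRing R K] {n : ℕ} (hn : 0 < n)
    {x : K} {c : R} (hx : x ^ n = algebraMap R K c) : ∃ y : R, y ^ n = c := by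
  obtain ⟨y, rfl⟩ := IsIntegrallyClosed.exists_algebraMap_eq_of_isIntegral_pow hn
    (hx ▸ isIntegral_algebraMap : IsIntegral R (x ^ n))
  exact ⟨y, IsFractionRing.injective R K (by rwa [map_pow])⟩

section PureExtension

variable {F K : Type*} [Field F] {c : F}

theorem linearIndependent_pow_of_pow_prime_eq [Ring K] [Nontrivial K] [Algebra F K]
    {p : ℕ} (hp : p.Prime) (hc : ∀ b : F, b ^ p ≠ c) {ω : K} (hω : ω ^ p = algebraMap F K c) :
    LinearIndependent F fun i : Fin p ↦ ω ^ (i : ℕ) := by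
  have minpoly_eq : Polynomial.X ^ p - Polynomial.C c = minpoly F ω :=
    minpoly.eq_of_irreducible_of_monic (X_pow_sub_C_irreducible_of_prime hp hc)
      (by simp [hω]) (Polynomial.monic_X_pow_sub_C c hp.ne_zero)
  have natDegree_eq : (minpoly F ω).natDegree = p := by
    rw [← minpoly_eq, Polynomial.natDegree_X_pow_sub_C]
  have independent := linearIndependent_pow (K := F) ω
  rwa [natDegree_eq] at independent

theorem coeffs_eq_zero_of_cube_eq [Ring K] [Nontrivial K] [Algebra F K]
    (hc : ∀ b : F, b ^ 3 ≠ c) {ω : K} (hω : ω ^ 3 = algebraMap F K c) {u v w : F}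
    (h : algebraMap F K u + algebraMap F K v * ω + algebraMap F K w * ω ^ 2 = 0) :
    u = 0 ∧ v = 0 ∧ w = 0 := by
  have independent := linearIndependent_pow_of_pow_prime_eq Nat.prime_three hc hω
  have coeffs_zero := Fintype.linearIndependent_iff.mp independent ![u, v, w]
    (by simpa [Fin.sum_univ_three, Algebra.smul_def] using h)
  exact ⟨coeffs_zero 0, coeffs_zero 1, coeffs_zero 2⟩

variable [CommRing K] [Nontrivial K] [Algebra F K] {ω : K}

theorem coeffs_eq_of_sq_eq (hc : ∀ b : F, b ^ 3 ≠ c) (hω : ω ^ 3 = algebraMap F K c)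
    {r s t u v w : F}
    (h : (algebraMap F K r + algebraMap F K s * ω + algebraMap F K t * ω ^ 2) ^ 2 =
      algebraMap F K u + algebraMap F K v * ω + algebraMap F K w * ω ^ 2) :
    r ^ 2 + 2 * c * s * t = u ∧ 2 * r * s + c * t ^ 2 = v ∧ s ^ 2 + 2 * r * t = w := by
  simp only [← sub_eq_zero (b := u), ← sub_eq_zero (b := v), ← sub_eq_zero (b := w)]
  refine coeffs_eq_zero_of_cube_eq hc hω ?_
  simp only [map_sub, map_add, map_mul, map_pow, map_ofNat]
  linear_combination
    h - (2 * algebraMap F K s * algebraMap F K t + algebraMap F K t ^ 2 * ω) * hω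

theorem point_of_binomial_square_general (h2 : (2 : F) ≠ 0) (hc : ∀ b : F, b ^ 3 ≠ c)
    (hω : ω ^ 3 = algebraMap F K c) {r s t a : F}
    (h : (algebraMap F K r + algebraMap F K s * ω + algebraMap F K t * ω ^ 2) ^ 2 =
      algebraMap F K a - ω) :
    t ≠ 0 ∧ r = -s ^ 2 / (2 * t) ∧ (1 / t) ^ 2 = (s / t) ^ 3 - c := by
  obtain ⟨-, coeff_one, coeff_two⟩ :
      _ ∧ 2 * r * s + c * t ^ 2 = -1 ∧ s ^ 2 + 2 * r * t = 0 :=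
    coeffs_eq_of_sq_eq hc hω (u := a) (by simpa [sub_eq_add_neg] using h)
  have t_ne_zero : t ≠ 0 := by
    rintro rfl
    have s_eq_zero : s = 0 := by simpa using coeff_two
    simp [s_eq_zero] at coeff_one
  refine ⟨t_ne_zero, ?_, ?_⟩
  · rw [eq_div_iff (mul_ne_zero h2 t_ne_zero)]
    linear_combination coeff_two
  · have cleared : t = s ^ 3 - c * t ^ 3 := by
      linear_combination t * coeff_one - s * coeff_two
    field_simp
    linear_combination cleared

end PureExtension

/-- If `α = r + sω + tω²` satisfies `α² = a − ω`, then `t ≠ 0`,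
`r = −s²/(2t)`, and `(s/t, 1/t)` is an affine rational point on `y² = x³ − m`. -/
theorem point_of_binomial_square
    (m : ℤ) (hm : ¬ ∃ k : ℤ, k ^ 3 = m)
    (K : Type*) [Field K] [CharZero K] (hK : Module.finrank ℚ K = 3)
    (ω : K) (hω : ω ^ 3 = (m : K))
    (r s t a : ℚ)
    (h : ((r : K) + (s : K) * ω + (t : K) * ω ^ 2) ^ 2 = (a : K) - ω) :
    t ≠ 0 ∧ r = -s ^ 2 / (2 * t) ∧ (1 / t) ^ 2 = (s / t) ^ 3 - (m : ℚ) := by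
  have not_cube_rat : ∀ q : ℚ, q ^ 3 ≠ m := fun q hq ↦
    hm (exists_pow_eq_of_pow_eq_algebraMap three_pos hq)
  exact point_of_binomial_square_general two_ne_zero not_cube_rat
    (show ω ^ 3 = algebraMap ℚ K m by simpa only [map_intCast] using hω)
    (by simpa only [eq_ratCast] using h)
end

section
/- If the elliptic curve E_m : y² = x³ − m has no rational point except the point at infinity, then there exists no α ∈ K^× and a ∈ ℚ with α² = a − ω. -/
/-!
Norms carry squares to squares. In an extension `K / F` of odd degree, an element of an intermediate
field which becomes a square in `K` is already a square, since its norm is an odd power of it. So if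
`a - ω` is a square in `K`, it is one in `F⟮ω⟯`, and its norm from `F⟮ω⟯` to `F`, which is the value
at `a` of the minimal polynomial of `ω`, is a square in `F`. When `ω ^ p = c` and `y² = xᵖ - c` has
no point over `F`, then `c` is not a `p`-th power (otherwise there is a point with `y = 0`), the
minimal polynomial of `ω` is `Xᵖ - c`, and a square value of it at `a` would be a point.
-/

open Polynomial IntermediateField Module

theorem isSquare_pow_iff_of_odd {G : Type*} [CommGroupWithZero G] {n : ℕ} (hn : Odd n) {x : G} :
    IsSquare (x ^ n) ↔ IsSquare x := by
  refine ⟨fun h ↦ ?_, fun h ↦ h.pow n⟩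
  obtain ⟨k, rfl⟩ := hn
  obtain rfl | hx := eq_or_ne x 0
  · exact IsSquare.zero
  · have hdiv : x = x ^ (2 * k + 1) / x ^ (2 * k) := by
      rw [pow_succ, mul_div_cancel_left₀ _ (pow_ne_zero _ hx)]
    rw [hdiv]
    exact h.div ((even_two_mul k).isSquare_pow x)

theorem isSquare_algebraMap_iff_of_odd_finrank {F K : Type*} [Field F] [Ring K] [Algebra F K]
    (hK : Odd (finrank F K)) {x : F} : IsSquare (algebraMap F K x) ↔ IsSquare x := by
  refine ⟨fun h ↦ ?_, fun h ↦ h.map (algebraMap F K)⟩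
  rw [← isSquare_pow_iff_of_odd hK, ← Algebra.norm_algebraMap]
  exact h.map (Algebra.norm F)

theorem norm_algebraMap_sub_gen {R S : Type*} [CommRing R] [Ring S] [Algebra R S]
    (pb : PowerBasis R S) (a : R) :
    Algebra.norm R (algebraMap R S a - pb.gen) = (minpoly R pb.gen).eval a := by
  rw [← charpoly_leftMulMatrix pb, Matrix.eval_charpoly, Algebra.norm_eq_matrix_det pb.basis,
    map_sub, AlgHom.commutes, Matrix.algebraMap_eq_diagonal, Matrix.scalar_apply,
    Pi.algebraMap_def, Algebra.algebraMap_self_apply]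

section Field

variable {F K : Type*} [Field F] [Field K] [Algebra F K]

theorem isSquare_eval_minpoly_of_isSquare_sub (hK : Odd (finrank F K)) {ω : K} {a : F}
    (h : IsSquare (algebraMap F K a - ω)) : IsSquare ((minpoly F ω).eval a) := by
  have : FiniteDimensional F K := finite_of_finrank_pos hK.pos
  have hodd : Odd (finrank F⟮ω⟯ K) :=
    (Nat.odd_mul.mp ((finrank_mul_finrank F F⟮ω⟯ K).symm ▸ hK)).2
  have hsq : IsSquare (algebraMap F F⟮ω⟯ a - AdjoinSimple.gen F ω) := by
    rw [← isSquare_algebraMap_iff_of_odd_finrank hodd]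
    exact h
  have hnorm := norm_algebraMap_sub_gen (adjoin.powerBasis (Algebra.IsIntegral.isIntegral ω)) a
  rw [adjoin.powerBasis_gen, minpoly_gen] at hnorm
  rw [← hnorm]
  exact hsq.map (Algebra.norm F)

theorem minpoly_eq_X_pow_sub_C_of_prime {p : ℕ} (hp : p.Prime) {c : F} {ω : K}
    (hω : ω ^ p = algebraMap F K c) (hc : ∀ b : F, b ^ p ≠ c) : minpoly F ω = X ^ p - C c :=
  (minpoly.eq_of_irreducible_of_monic (X_pow_sub_C_irreducible_of_prime hp hc) (by simp [hω])
    (monic_X_pow_sub_C c hp.ne_zero)).symm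

theorem no_binomial_square_of_no_point_general (hK : Odd (finrank F K)) {p : ℕ} (hp : p.Prime)
    {c : F} {ω : K} (hω : ω ^ p = algebraMap F K c) (hE : ¬ ∃ x y : F, y ^ 2 = x ^ p - c) :
    ¬ ∃ (α : K) (a : F), α ^ 2 = algebraMap F K a - ω := by
  rintro ⟨α, a, hα⟩
  have hc : ∀ b : F, b ^ p ≠ c := fun b hb ↦ hE ⟨b, 0, by simp [hb]⟩
  have hsq : IsSquare ((minpoly F ω).eval a) :=
    isSquare_eval_minpoly_of_isSquare_sub hK (hα ▸ IsSquare.sq α)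
  obtain ⟨y, hy⟩ := (isSquare_iff_exists_sq _).mp hsq
  refine hE ⟨a, y, ?_⟩
  simpa [minpoly_eq_X_pow_sub_C_of_prime hp hω hc] using hy.symm

end Field

/-- If `E_m : y² = x³ − m` has no rational point other than the point at
infinity, then no `α ∈ K^×` satisfies `α² = a − ω` with `a ∈ ℚ`. -/
theorem no_binomial_square_of_no_point
    (m : ℤ) (hm : ¬ ∃ k : ℤ, k ^ 3 = m)
    (K : Type*) [Field K] [CharZero K] (hK : Module.finrank ℚ K = 3)
    (ω : K) (hω : ω ^ 3 = (m : K))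
    (hE : ¬ ∃ x y : ℚ, y ^ 2 = x ^ 3 - (m : ℚ)) :
    ¬ ∃ (α : K) (a : ℚ), α ≠ 0 ∧ α ^ 2 = (a : K) - ω := fun ⟨α, a, _, hα⟩ ↦
  no_binomial_square_of_no_point_general (hK ▸ by decide) Nat.prime_three
    (hω.trans (map_intCast (algebraMap ℚ K) m).symm) hE ⟨α, a, hα⟩
end

section
/- For a ∈ ℚ, the element a − ω is a square in K^× if and only if there exists a rational point P on E_m such that 2P (the double of P in the group law of E_m(ℚ)) is an affine point with x-coordinate equal to a. In that case, writing 2P = (a, y'), the norm satisfies N_{K/ℚ}(a − ω) = a³ − m = y'². -/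
/-- The elliptic curve `E_m : y² = x³ − m` over `ℚ` in Weierstrass form. -/
def Wm (m : ℤ) : WeierstrassCurve.Affine ℚ := ⟨0, 0, 0, 0, -(m : ℚ)⟩

/-!
Let `y² = f(x)` be a curve with `f` a monic cubic, and let `θ` be a root of `f`. The line `y = L(x)`
tangent to the curve at `P = (x₀, y₀)` meets it again at the abscissa `a` of `2P`, which is the
identity `f = L² + (X - x₀)² (X - a)`. Evaluating it at `θ` gives `a - θ = (L(θ) / (θ - x₀))²`.

Conversely, let `f` be irreducible and `a - θ = α²` with `α` in the cubic field `F(θ)`. Counting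
dimensions, `1, θ, α, θα` are linearly dependent, so `(θ - x₀) α = L(θ)` for some linear `L`.
Then `L² + (X - x₀)² (X - a)` is a monic cubic that vanishes at `θ`, so it is `f`, and the line
`y = L(x)` is tangent to the curve at `(x₀, L(x₀))`, whose double has abscissa `a`.
-/

open Polynomial Module WeierstrassCurve
open WeierstrassCurve.Affine (linePolynomial)

theorem pow_ne_algebraMap_of_not_exists_pow_eq {R K : Type*} [CommRing R] [IsIntegrallyClosed R]
    [Field K] [Algebra R K] [IsFractionRing R K] {m : R} {n : ℕ} (hn : 0 < n)
    (hm : ¬ ∃ k : R, k ^ n = m) (b : K) : b ^ n ≠ algebraMap R K m := by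
  intro hb
  have hint : IsIntegral R (b ^ n) := hb ▸ isIntegral_algebraMap
  obtain ⟨k, rfl⟩ := IsIntegrallyClosed.exists_algebraMap_eq_of_isIntegral_pow hn hint
  exact hm ⟨k, FaithfulSMul.algebraMap_injective R K (by rw [map_pow, hb])⟩

theorem minpoly_eq_X_pow_sub_C {F K : Type*} [Field F] [Ring K] [Nontrivial K] [Algebra F K] {p : ℕ}
    (hp : p.Prime) {c : F} (hc : ∀ b : F, b ^ p ≠ c) {ω : K} (hω : ω ^ p = algebraMap F K c) :
    minpoly F ω = X ^ p - C c :=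
  (minpoly.eq_of_irreducible_of_monic (X_pow_sub_C_irreducible_of_prime hp hc) (by simp [hω])
    (monic_X_pow_sub_C c hp.ne_zero)).symm

section Algebra

variable {F K : Type*} [Field F] [CommRing K] [Algebra F K] [FiniteDimensional F K]

theorem charpoly_lmul_eq_minpoly {θ : K} (hθ : (minpoly F θ).natDegree = finrank F K) :
    (Algebra.lmul F K θ).charpoly = minpoly F θ := by
  have hdvd : minpoly F θ ∣ (Algebra.lmul F K θ).charpoly := by
    rw [← minpoly.algHom_eq (Algebra.lmul F K) Algebra.lmul_injective θ]
    exact LinearMap.minpoly_dvd_charpoly _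
  refine eq_of_monic_of_dvd_of_natDegree_le (minpoly.monic (.of_finite F θ))
    (LinearMap.charpoly_monic _) hdvd ?_
  rw [LinearMap.charpoly_natDegree, hθ]

theorem norm_algebraMap_sub_eq_eval_minpoly {θ : K}
    (hθ : (minpoly F θ).natDegree = finrank F K) (a : F) :
    Algebra.norm F (algebraMap F K a - θ) = (minpoly F θ).eval a := by
  rw [← charpoly_lmul_eq_minpoly hθ, LinearMap.eval_charpoly, Algebra.norm_apply, map_sub,
    AlgHom.commutes]

theorem exists_aeval_mul_eq_aeval {θ : K} {i j : ℕ} (hij : finrank F K < i + j)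
    (hj : j ≤ (minpoly F θ).natDegree) (α : K) :
    ∃ p ∈ degreeLT F i, ∃ q ∈ degreeLT F j, p ≠ 0 ∧ aeval θ p * α = aeval θ q := by
  let evalDiff : degreeLT F i × degreeLT F j →ₗ[F] K :=
    (LinearMap.mulRight F α ∘ₗ (aeval θ).toLinearMap ∘ₗ (degreeLT F i).subtype).coprod
      (-((aeval θ).toLinearMap ∘ₗ (degreeLT F j).subtype))
  have hlt : finrank F K < finrank F (degreeLT F i × degreeLT F j) := by
    simpa [(degreeLTEquiv F _).finrank_eq] using hij
  obtain ⟨⟨⟨p, hp⟩, ⟨q, hq⟩⟩, hpq, hne⟩ :=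
    (LinearMap.ker evalDiff).ne_bot_iff.1 (LinearMap.ker_ne_bot_of_finrank_lt hlt)
  have heq : aeval θ p * α = aeval θ q := by
    simpa [evalDiff, ← sub_eq_add_neg, sub_eq_zero] using hpq
  refine ⟨p, hp, q, hq, ?_, heq⟩
  rintro rfl
  have hroot : aeval θ q = 0 := by simpa using heq.symm
  have hdeg : q.degree < (minpoly F θ).degree :=
    (mem_degreeLT.1 hq).trans_le <| (Nat.cast_le.2 hj).trans_eq
      (degree_eq_natDegree (minpoly.ne_zero (.of_finite F θ))).symm
  obtain rfl : q = 0 := eq_zero_of_dvd_of_degree_lt (minpoly.dvd F θ hroot) hdeg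
  exact hne rfl

end Algebra

section TangentLine

theorem linePolynomial_sq_add_eq_toPoly {R : Type*} [CommRing R] (x y s a : R) :
    linePolynomial x y s ^ 2 + (X - C x) ^ 2 * (X - C a) =
      Cubic.toPoly ⟨1, s ^ 2 - 2 * x - a, 2 * s * (y - s * x) + x ^ 2 + 2 * x * a,
        (y - s * x) ^ 2 - x ^ 2 * a⟩ := by
  simp only [linePolynomial, Cubic.toPoly, map_sub, map_add, map_mul, map_pow, map_one,
    map_ofNat C]
  ring

/-- For `f` the right-hand side of a curve `y² = f(x)`, the line of slope `s` through the point
`(x, y)` is tangent to the curve at that point and meets it again at the abscissa `a`. This is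
encoded by the factorization of `f - L²`, where `L` is the equation of the line. -/
def IsTangentLine {R : Type*} [CommRing R] (f : R[X]) (x y s a : R) : Prop :=
  f = linePolynomial x y s ^ 2 + (X - C x) ^ 2 * (X - C a)

namespace IsTangentLine

theorem eval_eq_sq {R : Type*} [CommRing R] {f : R[X]} {x y s a : R}
    (h : IsTangentLine f x y s a) : f.eval x = y ^ 2 := by
  rw [h]
  simp [linePolynomial]

variable {F K : Type*} [Field F] [Field K] [Algebra F K]

theorem exists_sq_eq {f : F[X]} {x y s a : F} {θ : K} (h : IsTangentLine f x y s a)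
    (hy : y ≠ 0) (hθ : aeval θ f = 0) : ∃ α : K, α ^ 2 = algebraMap F K a - θ := by
  have hθx : θ - algebraMap F K x ≠ 0 := by
    intro hzero
    obtain rfl := sub_eq_zero.1 hzero
    rw [aeval_algebraMap_apply, coe_aeval_eq_eval, h.eval_eq_sq, map_pow] at hθ
    exact hy (by simpa using hθ)
  refine ⟨aeval θ (linePolynomial x y s) / (θ - algebraMap F K x), ?_⟩
  rw [h] at hθ
  simp only [map_add, map_mul, map_pow, map_sub, aeval_X, aeval_C] at hθ
  rw [div_pow, div_eq_iff (pow_ne_zero 2 hθx)]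
  linear_combination hθ

end IsTangentLine

variable {F K : Type*} [Field F] [Field K] [Algebra F K] {θ α : K} {a : F}

theorem aeval_ne_of_sq_eq_algebraMap_sub (hθ : 2 < (minpoly F θ).natDegree)
    (hα : α ^ 2 = algebraMap F K a - θ) {q : F[X]} (hq : q.natDegree ≤ 1) : aeval θ q ≠ α := by
  rintro rfl
  have hroot : aeval θ (q ^ 2 - (C a - X)) = 0 := by simp [hα]
  have hdeg : (q ^ 2 - (C a - X)).natDegree ≤ 2 := by
    compute_degree
    omega
  have hsq : q ^ 2 = C a - X := sub_eq_zero.1 <|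
    eq_zero_of_dvd_of_natDegree_lt (minpoly.dvd F θ hroot) (hdeg.trans_lt hθ)
  have hparity : 2 * q.natDegree = 1 := by
    rw [← natDegree_pow, hsq, natDegree_sub, natDegree_X_sub_C]
  omega

theorem exists_sub_mul_eq_aeval_linePolynomial (hK : finrank F K = 3)
    (hθ : (minpoly F θ).natDegree = 3) (hα : α ^ 2 = algebraMap F K a - θ) :
    ∃ x y s : F, (θ - algebraMap F K x) * α = aeval θ (linePolynomial x y s) := by
  have : FiniteDimensional F K := .of_finrank_pos (by omega)
  obtain ⟨p, hp, q, hq, hp0, hpq⟩ :=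
    exists_aeval_mul_eq_aeval (F := F) (θ := θ) (i := 2) (j := 2) (by omega) (by omega) α
  have natDegree_le_one {r : F[X]} (hr : r ∈ degreeLT F 2) : r.natDegree ≤ 1 :=
    natDegree_le_of_degree_le (Order.le_of_lt_succ (mem_degreeLT.1 hr))
  obtain ⟨b, c, rfl⟩ := exists_eq_X_add_C_of_natDegree_le_one (natDegree_le_one hp)
  obtain ⟨d, e, rfl⟩ := exists_eq_X_add_C_of_natDegree_le_one (natDegree_le_one hq)
  have hb : b ≠ 0 := by
    rintro rfl
    have hc : c ≠ 0 := by simpa using hp0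
    refine aeval_ne_of_sq_eq_algebraMap_sub (by omega) hα
      ((natDegree_C_mul_le c⁻¹ _).trans (natDegree_le_one hq)) ?_
    rw [map_mul, ← hpq]
    simp [hc]
  refine ⟨-c / b, e / b - d / b * (c / b), d / b, ?_⟩
  have hbK : algebraMap F K b ≠ 0 := by simpa using hb
  simp only [linePolynomial, map_add, map_mul, map_sub, map_neg, map_div₀, aeval_X,
    aeval_C] at hpq ⊢
  field_simp
  linear_combination algebraMap F K b * hpq

theorem exists_isTangentLine_of_sq_eq (hK : finrank F K = 3)
    (hθ : (minpoly F θ).natDegree = 3) (hα : α ^ 2 = algebraMap F K a - θ) :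
    ∃ x y s : F, y ≠ 0 ∧ IsTangentLine (minpoly F θ) x y s a := by
  have hint : IsIntegral F θ := minpoly.ne_zero_iff.1 (ne_zero_of_natDegree_gt (hθ ▸ three_pos))
  obtain ⟨x, y, s, hline⟩ := exists_sub_mul_eq_aeval_linePolynomial hK hθ hα
  have hroot : aeval θ (linePolynomial x y s ^ 2 + (X - C x) ^ 2 * (X - C a)) = 0 := by
    simp only [map_add, map_mul, map_pow, map_sub, aeval_X, aeval_C, ← hline]
    linear_combination (θ - algebraMap F K x) ^ 2 * hα
  have hmonic : (linePolynomial x y s ^ 2 + (X - C x) ^ 2 * (X - C a)).Monic := by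
    rw [linePolynomial_sq_add_eq_toPoly]
    exact Cubic.monic_of_a_eq_one'
  have hdeg : (linePolynomial x y s ^ 2 + (X - C x) ^ 2 * (X - C a)).natDegree = 3 := by
    rw [linePolynomial_sq_add_eq_toPoly]
    exact Cubic.natDegree_of_a_ne_zero' one_ne_zero
  have htangent : IsTangentLine (minpoly F θ) x y s a :=
    (eq_of_monic_of_dvd_of_natDegree_le (minpoly.monic hint) hmonic (minpoly.dvd F θ hroot)
      (hdeg.trans hθ.symm).le).symm
  refine ⟨x, y, s, ?_, htangent⟩
  rintro rfl
  exact (minpoly.irreducible hint).not_isRoot_of_natDegree_ne_one (by omega)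
    (htangent.eval_eq_sq.trans (zero_pow two_ne_zero))

end TangentLine

section Doubling

/-- The polynomial `X³ + a₂X² + a₄X + a₆`, so that `W` is the curve `y² = f(x)` with `f` this cubic
when `a₁ = a₃ = 0`. -/
noncomputable def weierstrassCubic {R : Type*} [CommRing R] (W : Affine R) : R[X] :=
  Cubic.toPoly ⟨1, W.a₂, W.a₄, W.a₆⟩

section CommRing

variable {R : Type*} [CommRing R] {W : Affine R} {x y s a : R}

theorem IsTangentLine.coeff_eq (h : IsTangentLine (weierstrassCubic W) x y s a) :
    W.a₂ = s ^ 2 - 2 * x - a ∧ W.a₄ = 2 * s * (y - s * x) + x ^ 2 + 2 * x * a := by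
  have hcoeff := h.trans (linePolynomial_sq_add_eq_toPoly x y s a)
  exact ⟨Cubic.b_of_eq hcoeff, Cubic.c_of_eq hcoeff⟩

variable [IsCharNeTwoNF W]

theorem equation_iff_sq_eq_eval : W.Equation x y ↔ y ^ 2 = (weierstrassCubic W).eval x := by
  simp [Affine.equation_iff, weierstrassCubic, Cubic.toPoly]

theorem addPolynomial_eq_sq_sub :
    W.addPolynomial x y s = linePolynomial x y s ^ 2 - weierstrassCubic W := by
  simp [Affine.addPolynomial, Affine.polynomial, weierstrassCubic, Cubic.toPoly]

theorem ne_negY_iff [NoZeroDivisors R] (h2 : (2 : R) ≠ 0) : y ≠ W.negY x y ↔ y ≠ 0 := by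
  simp [Affine.negY, eq_neg_iff_add_eq_zero, ← two_mul, h2]

end CommRing

variable {F : Type*} [Field F] [DecidableEq F] {W : Affine F} [IsCharNeTwoNF W]
  {x y s a : F}

theorem isTangentLine_slope_addX (heq : W.Equation x y) (hy : y ≠ W.negY x y) :
    IsTangentLine (weierstrassCubic W) x y (W.slope x x y y) (W.addX x x (W.slope x x y y)) := by
  have hslope := Affine.addPolynomial_slope heq heq fun h => hy h.2
  rw [addPolynomial_eq_sq_sub] at hslope
  unfold IsTangentLine
  linear_combination -hslope

theorem IsTangentLine.slope_eq (h : IsTangentLine (weierstrassCubic W) x y s a)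
    (hy : y ≠ W.negY x y) : W.slope x x y y = s := by
  obtain ⟨ha₂, ha₄⟩ := h.coeff_eq
  rw [Affine.slope_of_Y_ne rfl hy, div_eq_iff (sub_ne_zero.2 hy)]
  simp only [Affine.negY, a₁_of_isCharNeTwoNF, a₃_of_isCharNeTwoNF, ha₂, ha₄]
  ring

theorem IsTangentLine.exists_two_nsmul_eq_some (h : IsTangentLine (weierstrassCubic W) x y s a)
    (hy : y ≠ W.negY x y) :
    ∃ (P : W.Point) (y' : F) (h : W.Nonsingular a y'), 2 • P = .some a y' h := by
  have heq : W.Equation x y := equation_iff_sq_eq_eval.2 h.eval_eq_sq.symm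
  have hns : W.Nonsingular x y := (W.nonsingular_iff x y).2 ⟨heq, .inr hy⟩
  have haddX : W.addX x x (W.slope x x y y) = a := by
    simp only [h.slope_eq hy, Affine.addX, a₁_of_isCharNeTwoNF, h.coeff_eq.1]
    ring
  subst haddX
  exact ⟨.some x y hns, _, _, (two_nsmul _).trans (Affine.Point.add_self_of_Y_ne hy)⟩

theorem exists_two_nsmul_eq_some_iff (h2 : (2 : F) ≠ 0) :
    (∃ (P : W.Point) (y' : F) (h : W.Nonsingular a y'), 2 • P = .some a y' h) ↔
      ∃ x y s : F, y ≠ 0 ∧ IsTangentLine (weierstrassCubic W) x y s a := by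
  constructor
  · rintro ⟨P, y', h, hP⟩
    rw [two_nsmul] at hP
    rcases P with _ | ⟨x, y, hxy⟩
    · exact absurd (hP.symm.trans (add_zero 0)) (Affine.Point.some_ne_zero h)
    by_cases hy : y = W.negY x y
    · rw [Affine.Point.add_self_of_Y_eq hy] at hP
      exact absurd hP.symm (Affine.Point.some_ne_zero h)
    rw [Affine.Point.add_self_of_Y_ne hy] at hP
    obtain ⟨rfl, -⟩ := Affine.Point.some.inj hP
    exact ⟨x, y, _, (ne_negY_iff h2).1 hy, isTangentLine_slope_addX hxy.1 hy⟩
  · rintro ⟨x, y, s, hy, h⟩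
    exact h.exists_two_nsmul_eq_some ((ne_negY_iff h2).2 hy)

end Doubling

theorem binomial_square_iff_double_point_general {F K : Type*} [Field F] [DecidableEq F]
    (h2 : (2 : F) ≠ 0) (W : Affine F) [IsCharNeTwoNF W] [Field K] [Algebra F K]
    (hK : finrank F K = 3) (θ : K) (hθ : minpoly F θ = weierstrassCubic W) (a : F) :
    ((∃ α : K, α ≠ 0 ∧ α ^ 2 = algebraMap F K a - θ) ↔
      ∃ (P : W.Point) (y' : F) (h : W.Nonsingular a y'), 2 • P = .some a y' h) ∧
    ∀ (P : W.Point) (y' : F) (h : W.Nonsingular a y'), 2 • P = .some a y' h →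
      Algebra.norm F (algebraMap F K a - θ) = (weierstrassCubic W).eval a ∧
      (weierstrassCubic W).eval a = y' ^ 2 := by
  have : FiniteDimensional F K := .of_finrank_pos (by omega)
  have hdeg : (minpoly F θ).natDegree = 3 := by
    rw [hθ]; exact Cubic.natDegree_of_a_ne_zero' one_ne_zero
  refine ⟨?_, fun P y' h _ => ⟨?_, (equation_iff_sq_eq_eval.1 h.1).symm⟩⟩
  · rw [exists_two_nsmul_eq_some_iff h2, ← hθ]
    constructor
    · rintro ⟨α, -, hα⟩
      exact exists_isTangentLine_of_sq_eq hK hdeg hα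
    · rintro ⟨x, y, s, hy, htangent⟩
      obtain ⟨α, hα⟩ := htangent.exists_sq_eq hy (minpoly.aeval F θ)
      refine ⟨α, ?_, hα⟩
      rintro rfl
      have hθa : θ = algebraMap F K a := by linear_combination hα
      rw [hθa, minpoly.eq_X_sub_C, natDegree_X_sub_C] at hdeg
      omega
  · rw [norm_algebraMap_sub_eq_eval_minpoly (hdeg.trans hK.symm), hθ]

instance isCharNeTwoNF_Wm (m : ℤ) : IsCharNeTwoNF (Wm m) := ⟨rfl, rfl⟩

theorem weierstrassCubic_Wm (m : ℤ) : weierstrassCubic (Wm m) = X ^ 3 - C (m : ℚ) := by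
  simp [weierstrassCubic, Wm, Cubic.toPoly, sub_eq_add_neg]

theorem minpoly_eq_weierstrassCubic_Wm {m : ℤ} (hm : ¬ ∃ k : ℤ, k ^ 3 = m) {K : Type*} [Field K]
    [CharZero K] {ω : K} (hω : ω ^ 3 = (m : K)) : minpoly ℚ ω = weierstrassCubic (Wm m) := by
  rw [weierstrassCubic_Wm]
  exact minpoly_eq_X_pow_sub_C Nat.prime_three
    (pow_ne_algebraMap_of_not_exists_pow_eq three_pos hm) (by simpa using hω)

/-- `a − ω` is a square in `K^×` iff `a = x_{2P}` for some
`P ∈ E_m(ℚ)`; in that case, writing `2P = (a, y')`, one has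
`N_{K/ℚ}(a − ω) = a³ − m = y'²`. -/
theorem binomial_square_iff_double_point
    (m : ℤ) (hm : ¬ ∃ k : ℤ, k ^ 3 = m)
    (K : Type*) [Field K] [CharZero K] (hK : Module.finrank ℚ K = 3)
    (ω : K) (hω : ω ^ 3 = (m : K))
    (a : ℚ) :
    ((∃ α : K, α ≠ 0 ∧ α ^ 2 = (a : K) - ω) ↔
      ∃ (P : (Wm m).Point) (y' : ℚ) (h : (Wm m).Nonsingular a y'),
        2 • P = WeierstrassCurve.Affine.Point.some a y' h) ∧
    ∀ (P : (Wm m).Point) (y' : ℚ) (h : (Wm m).Nonsingular a y'),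
      2 • P = WeierstrassCurve.Affine.Point.some a y' h →
        Algebra.norm ℚ ((a : K) - ω) = a ^ 3 - (m : ℚ) ∧
        a ^ 3 - (m : ℚ) = y' ^ 2 := by
  simpa [weierstrassCubic_Wm] using binomial_square_iff_double_point_general two_ne_zero (Wm m) hK ω
    (minpoly_eq_weierstrassCubic_Wm hm hω) a
end

section
/- Let m be a cubefree integer that is not a perfect cube, and let P be a rational point on E_m : y² = x³ − m that is not in 2E_m(ℚ) (i.e. P ≠ 2Q for every Q ∈ E_m(ℚ)). Write P = (r/t², s/t³) with integers r, s, t satisfying gcd(r,t) = gcd(s,t) = 1. Then α = r − t²ω is not a square in K^×. -/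
/-!
Let `f` be a monic cubic over a field `F` of characteristic different from two and let `θ` be a
root of `f` that generates a cubic extension of `F`. Suppose that `x - θ = β ^ 2` with
`β = a + b θ + c θ ^ 2`. Then `c ≠ 0`, and multiplying `β` by `e - θ` for a suitable `e` in `F`
cancels its `θ ^ 2` term, so that `(x - θ) (e - θ) ^ 2 = (A + B θ) ^ 2`. Since `1, θ, θ ^ 2` are
independent, this is the polynomial identity `f(T) - (A + B T) ^ 2 = (T - x) (T - e) ^ 2`: the line
`y = A + B T` is tangent to `y ^ 2 = f(T)` at the point `Q` over `e` and meets the curve again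
over `x`. Hence `± 2 Q` are the points with first coordinate `x`.
-/

open Module WeierstrassCurve.Affine
open scoped IntermediateField

section CubicExtension

variable {F K : Type*} [Field F] [Field K] [Algebra F K]

local notation "ι" => algebraMap F K

lemma natDegree_minpoly_eq_finrank_of_prime (hp : (finrank F K).Prime) {θ : K}
    (hθ : θ ∉ Set.range ι) : (minpoly F θ).natDegree = finrank F K := by
  have : FiniteDimensional F K := FiniteDimensional.of_finrank_pos hp.pos
  have := IntermediateField.isSimpleOrder_of_finrank_prime F K hp
  refine (Field.primitive_element_iff_minpoly_natDegree_eq F θ).1 ?_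
  refine (eq_bot_or_eq_top F⟮θ⟯).resolve_left fun hbot => hθ ?_
  exact IntermediateField.mem_bot.1 (IntermediateField.adjoin_simple_eq_bot_iff.1 hbot)

lemma linearIndependent_pow_of_finrank_prime {p : ℕ} (hp : p.Prime) (hK : finrank F K = p)
    {θ : K} (hθ : θ ∉ Set.range ι) : LinearIndependent F fun i : Fin p => θ ^ (i : ℕ) := by
  have hdeg := (natDegree_minpoly_eq_finrank_of_prime (hK ▸ hp) hθ).trans hK
  exact hdeg ▸ linearIndependent_pow (K := F) θ

variable {θ : K}

lemma coeffs_eq_zero_of_quadratic_eq_zero (hK : finrank F K = 3) (hθ : θ ∉ Set.range ι)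
    {a b c : F} (h : ι a + ι b * θ + ι c * θ ^ 2 = 0) : a = 0 ∧ b = 0 ∧ c = 0 := by
  have hli := linearIndependent_pow_of_finrank_prime Nat.prime_three hK hθ
  have hcoeff := Fintype.linearIndependent_iff.1 hli ![a, b, c]
    (by simpa [Fin.sum_univ_three, Algebra.smul_def] using h)
  exact ⟨hcoeff 0, hcoeff 1, hcoeff 2⟩

lemma exists_eq_quadratic (hK : finrank F K = 3) (hθ : θ ∉ Set.range ι) (β : K) :
    ∃ a b c : F, β = ι a + ι b * θ + ι c * θ ^ 2 := by
  have hspan := (linearIndependent_pow_of_finrank_prime Nat.prime_three hK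
    hθ).span_eq_top_of_card_eq_finrank (by simp [hK])
  obtain ⟨f, hf⟩ := (Submodule.mem_span_range_iff_exists_fun F).1
    (hspan ▸ Submodule.mem_top : β ∈ _)
  exact ⟨f 0, f 1, f 2, by simpa [Fin.sum_univ_three, Algebra.smul_def] using hf.symm⟩

lemma leadingCoeff_ne_zero_of_quadratic_sq_eq_sub (hK : finrank F K = 3)
    (hθ : θ ∉ Set.range ι) {x a b c : F} (h : ι x - θ = (ι a + ι b * θ + ι c * θ ^ 2) ^ 2) :
    c ≠ 0 := by
  rintro rfl
  have hquad : ι (a ^ 2 - x) + ι (2 * a * b + 1) * θ + ι (b ^ 2) * θ ^ 2 = 0 := by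
    simp only [map_add, map_sub, map_mul, map_pow, map_one, map_zero, map_ofNat] at h ⊢
    linear_combination -h
  obtain ⟨-, hlin, hsq⟩ := coeffs_eq_zero_of_quadratic_eq_zero hK hθ hquad
  simp [pow_eq_zero_iff two_ne_zero |>.1 hsq] at hlin

variable {p q r : F}

lemma exists_sub_mul_quadratic_eq_linear (hroot : θ ^ 3 + ι p * θ ^ 2 + ι q * θ + ι r = 0)
    (a b : F) {c : F} (hc : c ≠ 0) :
    ∃ e A B : F, (ι e - θ) * (ι a + ι b * θ + ι c * θ ^ 2) = ι A + ι B * θ := by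
  refine ⟨b / c - p, (b / c - p) * a + c * r, (b / c - p) * b - a + c * q, ?_⟩
  have hcb : ι c * ι (b / c) = ι b := by rw [← map_mul, mul_div_cancel₀ b hc]
  simp only [map_add, map_sub, map_mul]
  linear_combination -ι c * hroot + θ ^ 2 * hcb

lemma exists_sub_mul_sq_eq_linear_sq_of_isSquare (hK : finrank F K = 3)
    (hθ : θ ∉ Set.range ι) (hroot : θ ^ 3 + ι p * θ ^ 2 + ι q * θ + ι r = 0) {x : F}
    (hx : IsSquare (ι x - θ)) :
    ∃ e A B : F, (ι x - θ) * (ι e - θ) ^ 2 = (ι A + ι B * θ) ^ 2 := by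
  obtain ⟨β, hβ⟩ := isSquare_iff_exists_sq _ |>.1 hx
  obtain ⟨a, b, c, rfl⟩ := exists_eq_quadratic hK hθ β
  have hc := leadingCoeff_ne_zero_of_quadratic_sq_eq_sub hK hθ hβ
  obtain ⟨e, A, B, hlin⟩ := exists_sub_mul_quadratic_eq_linear hroot a b hc
  exact ⟨e, A, B, by rw [hβ, ← hlin]; ring⟩

-- The coefficients of `T ^ 3 + p T ^ 2 + q T + r - (A + B T) ^ 2 = (T - x) (T - e) ^ 2`.
lemma coeffs_eq_of_sub_mul_sq_eq_linear_sq (hK : finrank F K = 3) (hθ : θ ∉ Set.range ι)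
    (hroot : θ ^ 3 + ι p * θ ^ 2 + ι q * θ + ι r = 0) {x e A B : F}
    (h : (ι x - θ) * (ι e - θ) ^ 2 = (ι A + ι B * θ) ^ 2) :
    r - A ^ 2 = -(x * e ^ 2) ∧ q - 2 * A * B = e ^ 2 + 2 * x * e ∧ p - B ^ 2 = -(x + 2 * e) := by
  have hquad : ι (r - A ^ 2 + x * e ^ 2) + ι (q - 2 * A * B - (e ^ 2 + 2 * x * e)) * θ +
      ι (p - B ^ 2 + (x + 2 * e)) * θ ^ 2 = 0 := by
    simp only [map_add, map_sub, map_mul, map_pow, map_ofNat]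
    linear_combination h + hroot
  obtain ⟨hconst, hlin, hsq⟩ := coeffs_eq_zero_of_quadratic_eq_zero hK hθ hquad
  exact ⟨eq_neg_of_add_eq_zero_left hconst, sub_eq_zero.1 hlin, eq_neg_of_add_eq_zero_left hsq⟩

-- If `A + B T` vanished at `e`, then cancelling `(e - θ) ^ 2` would give `θ = x - B ^ 2`.
lemma linear_eval_ne_zero_of_sub_mul_sq_eq_linear_sq (hθ : θ ∉ Set.range ι) {x e A B : F}
    (h : (ι x - θ) * (ι e - θ) ^ 2 = (ι A + ι B * θ) ^ 2) : A + B * e ≠ 0 := by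
  intro hzero
  have hne : (ι e - θ) ^ 2 ≠ 0 := pow_ne_zero 2 (sub_ne_zero.2 fun heq => hθ ⟨e, heq⟩)
  have hA : ι A = -(ι B * ι e) := by
    rw [← map_mul, ← map_neg, eq_neg_of_add_eq_zero_left hzero]
  have hcancel : ι x - θ = ι B ^ 2 := by
    refine mul_right_cancel₀ hne (h.trans ?_)
    rw [hA]
    ring
  exact hθ ⟨x - B ^ 2, by rw [map_sub, map_pow, ← hcancel]; ring⟩

end CubicExtension

section Doubling

variable {F : Type*} [Field F] [DecidableEq F] {W : WeierstrassCurve.Affine F}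

lemma exists_eq_two_nsmul_of_eq_addX {x y u v : F} (hP : W.Nonsingular x y)
    (hQ : W.Nonsingular u v) (hv : v ≠ W.negY u v) (hx : x = W.addX u u (W.slope u u v v)) :
    ∃ Q : W.Point, Point.some x y hP = 2 • Q := by
  have hdouble := Point.add_self_of_Y_ne (h₁ := hQ) hv
  rw [← two_nsmul] at hdouble
  rcases Point.X_eq_iff.1 hx with h | h
  · exact ⟨.some u v hQ, h.trans hdouble.symm⟩
  · exact ⟨-.some u v hQ, by rw [smul_neg, hdouble, h]⟩

lemma exists_eq_two_nsmul_of_tangent [W.IsCharNeTwoNF] (h2 : (2 : F) ≠ 0) {x y u v ℓ : F}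
    (hP : W.Nonsingular x y) (hQ : W.Equation u v) (hv : v ≠ 0)
    (htangent : 2 * v * ℓ = 3 * u ^ 2 + 2 * W.a₂ * u + W.a₄) (hx : x = ℓ ^ 2 - W.a₂ - 2 * u) :
    ∃ Q : W.Point, Point.some x y hP = 2 • Q := by
  have h2v : 2 * v ≠ 0 := mul_ne_zero h2 hv
  have hsub : v - W.negY u v = 2 * v := by
    simp only [negY, W.a₁_of_isCharNeTwoNF, W.a₃_of_isCharNeTwoNF]
    ring
  have hneg : v ≠ W.negY u v := sub_ne_zero.1 (hsub ▸ h2v)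
  have hslope : W.slope u u v v = ℓ := by
    rw [slope_of_Y_ne rfl hneg, hsub, div_eq_iff h2v, W.a₁_of_isCharNeTwoNF]
    linear_combination -htangent
  refine exists_eq_two_nsmul_of_eq_addX hP ((W.nonsingular_iff u v).2 ⟨hQ, .inr hneg⟩) hneg ?_
  rw [hslope, addX, W.a₁_of_isCharNeTwoNF, hx]
  ring

end Doubling

lemma exists_pow_eq_of_algebraMap_pow_eq {R K : Type*} [CommRing R] [IsIntegrallyClosed R]
    [Field K] [Algebra R K] [IsFractionRing R K] {n : ℕ} (hn : 0 < n)
    {a : R} {x : K} (h : x ^ n = algebraMap R K a) : ∃ k : R, k ^ n = a := by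
  obtain ⟨k, rfl⟩ := IsIntegrallyClosed.exists_algebraMap_eq_of_isIntegral_pow (R := R) hn
    (h ▸ isIntegral_algebraMap)
  exact ⟨k, IsFractionRing.injective R K (by rw [map_pow, h])⟩

lemma notMem_range_algebraMap_of_pow_eq_intCast {K : Type*} [Field K] [CharZero K] {n : ℕ}
    (hn : 0 < n) {m : ℤ} (hm : ¬ ∃ k : ℤ, k ^ n = m) {ω : K} (hω : ω ^ n = m) :
    ω ∉ Set.range (algebraMap ℚ K) := by
  rintro ⟨b, rfl⟩
  refine hm (exists_pow_eq_of_algebraMap_pow_eq (K := ℚ) hn (x := b) ?_)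
  rw [← map_pow, eq_ratCast] at hω
  exact_mod_cast hω

lemma isSquare_div_sq_sub {K : Type*} [Field K] {r t ω : K} (ht : t ≠ 0)
    (h : IsSquare (r - t ^ 2 * ω)) : IsSquare (r / t ^ 2 - ω) := by
  rw [show r / t ^ 2 - ω = (r - t ^ 2 * ω) / t ^ 2 by field_simp]
  exact h.div (IsSquare.sq t)

instance (m : ℤ) : (Wm m).IsCharNeTwoNF := ⟨rfl, rfl⟩

-- For `t = 0` the junk value `r / 0 = 0` makes `(r / t ^ 2, s / t ^ 3)` the origin.
lemma ne_zero_of_equation_Wm {m r s t : ℤ} (hm : m ≠ 0)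
    (h : (Wm m).Equation ((r : ℚ) / (t : ℚ) ^ 2) ((s : ℚ) / (t : ℚ) ^ 3)) : t ≠ 0 := by
  rintro rfl
  exact hm (by simpa [equation_iff, Wm] using h)

theorem not_square_of_not_double_general {F K : Type*} [Field F] [DecidableEq F] [Field K]
    [Algebra F K] (h2 : (2 : F) ≠ 0) (hK : finrank F K = 3) {W : WeierstrassCurve.Affine F}
    [W.IsCharNeTwoNF] {θ : K} (hθ : θ ∉ Set.range (algebraMap F K))
    (hroot : θ ^ 3 + algebraMap F K W.a₂ * θ ^ 2 + algebraMap F K W.a₄ * θ +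
      algebraMap F K W.a₆ = 0)
    {x y : F} (hns : W.Nonsingular x y) (hP : ∀ Q : W.Point, Point.some x y hns ≠ 2 • Q) :
    ¬ IsSquare (algebraMap F K x - θ) := by
  intro hsq
  obtain ⟨e, A, B, h⟩ := exists_sub_mul_sq_eq_linear_sq_of_isSquare hK hθ hroot hsq
  obtain ⟨h₀, h₁, h₂⟩ := coeffs_eq_of_sub_mul_sq_eq_linear_sq hK hθ hroot h
  have hQ : W.Equation e (A + B * e) := by
    rw [equation_iff, W.a₁_of_isCharNeTwoNF, W.a₃_of_isCharNeTwoNF]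
    linear_combination -h₀ - e * h₁ - e ^ 2 * h₂
  have htangent : 2 * (A + B * e) * B = 3 * e ^ 2 + 2 * W.a₂ * e + W.a₄ := by
    linear_combination -h₁ - 2 * e * h₂
  obtain ⟨Q, hPQ⟩ := exists_eq_two_nsmul_of_tangent h2 hns hQ
    (linear_eval_ne_zero_of_sub_mul_sq_eq_linear_sq hθ h) htangent (by linear_combination h₂)
  exact hP Q hPQ

/-- If `P = (r/t², s/t³) ∈ E_m(ℚ) \ 2E_m(ℚ)` with `gcd(r,t) = gcd(s,t) = 1`,
then `α = r − t²ω` is not a square in `K^×`. -/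
theorem not_square_of_not_double
    (m : ℤ) (hm : ¬ ∃ k : ℤ, k ^ 3 = m) (hcf : ∀ d : ℤ, d ^ 3 ∣ m → IsUnit d)
    (K : Type*) [Field K] [CharZero K] (hK : Module.finrank ℚ K = 3)
    (ω : K) (hω : ω ^ 3 = (m : K))
    (P : (Wm m).Point) (hP : ∀ Q : (Wm m).Point, P ≠ 2 • Q)
    (r s t : ℤ) (hrt : IsCoprime r t) (hst : IsCoprime s t)
    (hns : (Wm m).Nonsingular ((r : ℚ) / (t : ℚ) ^ 2) ((s : ℚ) / (t : ℚ) ^ 3))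
    (hPeq : P = WeierstrassCurve.Affine.Point.some _ _ hns) :
    ¬ ∃ β : K, (r : K) - (t : K) ^ 2 * ω = β ^ 2 := by
  have ht : t ≠ 0 := ne_zero_of_equation_Wm (fun h0 => hm ⟨0, by simp [h0]⟩) hns.1
  exact fun hsq => not_square_of_not_double_general two_ne_zero hK
    (notMem_range_algebraMap_of_pow_eq_intCast three_pos hm hω) (by simp [Wm, hω]) hns (hPeq ▸ hP)
    (by simpa using isSquare_div_sq_sub (Int.cast_ne_zero.2 ht) ((isSquare_iff_exists_sq _).2 hsq))
end

section
/- Let b be a nonzero rational number. Suppose α = r + sω + tω² with r, s, t ∈ ℚ satisfies α² = a − bω for some a ∈ ℚ. Then t ≠ 0 and the pair (x, y) = (bs/t, b²/t) satisfies y² = x³ − mb³; that is, it is an affine rational point on the quadratic twist curve E'_m : y² = x³ − mb³. -/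
/-!
Since `m` is not a cube, `X³ - m` is irreducible, so `1, ω, ω²` are linearly independent and the
coefficients of `ω` and `ω²` in `α² = a - bω` may be compared: `2rs + mt² = -b` and `s² + 2rt = 0`.
Eliminating `r` leaves `bt = s³ - mt³`, which becomes the twist equation after multiplication
by `b³ / t³`.
-/

theorem pow_ne_algebraMap_of_forall_pow_ne {R F : Type*} [CommRing R] [IsIntegrallyClosed R]
    [CommRing F] [Algebra R F] [IsFractionRing R F] {n : ℕ} (hn : 0 < n) {a : R}
    (ha : ∀ k : R, k ^ n ≠ a) (c : F) : c ^ n ≠ algebraMap R F a := by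
  intro hc
  obtain ⟨k, rfl⟩ := IsIntegrallyClosed.exists_algebraMap_eq_of_isIntegral_pow (R := R) hn
    (hc ▸ isIntegral_algebraMap : IsIntegral R (c ^ n))
  exact ha k (IsFractionRing.injective R F (by rw [map_pow, hc]))

section LinearIndependence

open Polynomial

variable {F K : Type*} [Field F] [Ring K] [Nontrivial K] [Algebra F K]

theorem minpoly_eq_X_pow_sub_C_s8 {n : ℕ} {a : F} (hirr : Irreducible (X ^ n - C a)) {x : K}
    (hx : x ^ n = algebraMap F K a) : minpoly F x = X ^ n - C a :=
  (minpoly.eq_of_irreducible_of_monic hirr (by simp [hx])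
    (monic_X_pow_sub_C a (ne_zero_of_irreducible_X_pow_sub_C hirr))).symm

theorem linearIndependent_pow_of_irreducible_X_pow_sub_C {n : ℕ} {a : F}
    (hirr : Irreducible (X ^ n - C a)) {x : K} (hx : x ^ n = algebraMap F K a) :
    LinearIndependent F fun i : Fin n ↦ x ^ (i : ℕ) := by
  have natDegree_minpoly : (minpoly F x).natDegree = n := by
    rw [minpoly_eq_X_pow_sub_C_s8 hirr hx, natDegree_X_pow_sub_C]
  exact natDegree_minpoly ▸ linearIndependent_pow (K := F) x

theorem coeffs_eq_of_cube_eq {m : F} (hm : ∀ c : F, c ^ 3 ≠ m) {ω : K}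
    (hω : ω ^ 3 = algebraMap F K m) {c₀ c₁ c₂ d₀ d₁ d₂ : F}
    (h : algebraMap F K c₀ + c₁ • ω + c₂ • ω ^ 2 = algebraMap F K d₀ + d₁ • ω + d₂ • ω ^ 2) :
    c₀ = d₀ ∧ c₁ = d₁ ∧ c₂ = d₂ := by
  have linearIndependent_pow_ω : LinearIndependent F fun i : Fin 3 ↦ ω ^ (i : ℕ) :=
    linearIndependent_pow_of_irreducible_X_pow_sub_C
      (X_pow_sub_C_irreducible_of_prime Nat.prime_three hm) hω
  have coeffs_eq : ![c₀, c₁, c₂] = ![d₀, d₁, d₂] :=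
    linearIndependent_pow_ω.fintypeLinearCombination_injective
      (by simpa [Fintype.linearCombination_apply, Fin.sum_univ_three,
        Algebra.algebraMap_eq_smul_one] using h)
  simpa using coeffs_eq

end LinearIndependence

section CoefficientEquations

variable {R : Type*} [CommRing R] {m b r s t : R}

theorem sq_add_smul_add_smul_sq_of_cube_eq {A : Type*} [CommRing A] [Algebra R A] {ω : A}
    (hω : ω ^ 3 = algebraMap R A m) :
    (algebraMap R A r + s • ω + t • ω ^ 2) ^ 2 =
      algebraMap R A (r ^ 2 + 2 * s * t * m) + (2 * r * s + m * t ^ 2) • ω +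
        (s ^ 2 + 2 * r * t) • ω ^ 2 := by
  simp only [Algebra.smul_def, map_add, map_mul, map_pow, map_ofNat]
  linear_combination (2 * algebraMap R A s * algebraMap R A t + algebraMap R A t ^ 2 * ω) * hω

theorem ne_zero_of_coeff_equations [IsReduced R] (hb : b ≠ 0)
    (coeff_one : 2 * r * s + m * t ^ 2 = -b) (coeff_two : s ^ 2 + 2 * r * t = 0) : t ≠ 0 := by
  rintro rfl
  have hs : s = 0 := by simpa using coeff_two
  exact hb (by simpa [hs] using coeff_one)

theorem mul_eq_cube_sub_of_coeff_equations (coeff_one : 2 * r * s + m * t ^ 2 = -b)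
    (coeff_two : s ^ 2 + 2 * r * t = 0) : b * t = s ^ 3 - m * t ^ 3 := by
  linear_combination t * coeff_one - s * coeff_two

end CoefficientEquations

section TwistPoint

variable {F : Type*} [Field F] {m b r s t : F}

theorem coeff_equations_of_sq_eq_sub_smul {K : Type*} [CommRing K] [Nontrivial K] [Algebra F K]
    (hm : ∀ c : F, c ^ 3 ≠ m) {ω : K} (hω : ω ^ 3 = algebraMap F K m) {a : F}
    (h : (algebraMap F K r + s • ω + t • ω ^ 2) ^ 2 = algebraMap F K a - b • ω) :
    2 * r * s + m * t ^ 2 = -b ∧ s ^ 2 + 2 * r * t = 0 := by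
  rw [sq_add_smul_add_smul_sq_of_cube_eq hω] at h
  exact (coeffs_eq_of_cube_eq hm hω (d₀ := a) (d₁ := -b) (d₂ := 0)
    (by rw [h, neg_smul, zero_smul, add_zero, sub_eq_add_neg])).2

theorem twist_equation_of_mul_eq_cube_sub (ht : t ≠ 0) (h : b * t = s ^ 3 - m * t ^ 3) :
    (b ^ 2 / t) ^ 2 = (b * s / t) ^ 3 - m * b ^ 3 :=
  calc (b ^ 2 / t) ^ 2 = b ^ 3 / t ^ 3 * (b * t) := by field_simp
    _ = b ^ 3 / t ^ 3 * (s ^ 3 - m * t ^ 3) := by rw [h]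
    _ = (b * s / t) ^ 3 - m * b ^ 3 := by field_simp

theorem twist_point_of_binomial_square_general {K : Type*} [CommRing K] [Nontrivial K]
    [Algebra F K] (hm : ∀ c : F, c ^ 3 ≠ m) {ω : K} (hω : ω ^ 3 = algebraMap F K m)
    (hb : b ≠ 0) {a : F}
    (h : (algebraMap F K r + s • ω + t • ω ^ 2) ^ 2 = algebraMap F K a - b • ω) :
    t ≠ 0 ∧ (b ^ 2 / t) ^ 2 = (b * s / t) ^ 3 - m * b ^ 3 := by
  obtain ⟨coeff_one, coeff_two⟩ := coeff_equations_of_sq_eq_sub_smul hm hω h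
  have ht : t ≠ 0 := ne_zero_of_coeff_equations hb coeff_one coeff_two
  have hbt : b * t = s ^ 3 - m * t ^ 3 := mul_eq_cube_sub_of_coeff_equations coeff_one coeff_two
  exact ⟨ht, twist_equation_of_mul_eq_cube_sub ht hbt⟩

end TwistPoint

/-- If `α = r + sω + tω²` satisfies `α² = a − bω` with `b ≠ 0`, then
`t ≠ 0` and `(bs/t, b²/t)` is an affine rational point on `y² = x³ − mb³`. -/
theorem twist_point_of_binomial_square
    (m : ℤ) (hm : ¬ ∃ k : ℤ, k ^ 3 = m)
    (K : Type*) [Field K] [CharZero K] (hK : Module.finrank ℚ K = 3)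
    (ω : K) (hω : ω ^ 3 = (m : K))
    (b : ℚ) (hb : b ≠ 0) (r s t a : ℚ)
    (h : ((r : K) + (s : K) * ω + (t : K) * ω ^ 2) ^ 2 = (a : K) - (b : K) * ω) :
    t ≠ 0 ∧ (b ^ 2 / t) ^ 2 = (b * s / t) ^ 3 - (m : ℚ) * b ^ 3 :=
  twist_point_of_binomial_square_general (K := K) (ω := ω) (a := a)
    (pow_ne_algebraMap_of_forall_pow_ne three_pos (not_exists.mp hm))
    (by simpa using hω) hb (by simpa only [Rat.smul_def, eq_ratCast] using h)
end

section
/- Let m be a cubefree integer with m ≢ 0 (mod 9), m ≢ 1 (mod 9) and m ≢ −1 (mod 9), and suppose m is not a perfect cube. Let (x, y) be an affine rational point on E_m : y² = x³ − m, and write x = a/e² with coprime integers a and e. Then there exists an ideal 𝔞 of O_K such that (a − e²ω)O_K = 𝔞²; in particular, the class of 𝔞 in Cl(K) has order dividing 2. -/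
open NumberField

/-!
Put `β = a² + a e²ω + e⁴ω²`, so that `(a - e²ω) β = a³ - m e⁶ = b²` for an integer `b`. It suffices
that every valuation `v ≤ 1` takes a square value at `a - e²ω`, and this is clear unless both
factors have valuation less than one. In that case some prime `p ∣ b` has `v p < 1`; it does not
divide `e`, and it divides `3a²`. If `p ∤ a`, then `p = 3` and `m ≡ ±1 (mod 9)`, which is excluded.
If `p ∣ a`, then `p` divides `m` exactly twice, so `v(ω)³ = v(p)²`. Hence `v(ω)` is a square, and
`v(a) ≤ v(p) < v(ω)` gives `v(a - e²ω) = v(ω)`.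
-/

section Dedekind

open IsDedekindDomain nonZeroDivisors

variable {R : Type*} [CommRing R] [IsDedekindDomain R]

theorem dvd_count_factors_of_intValuation_eq_pow {v : HeightOneSpectrum R} {r : R} (hr : r ≠ 0)
    {k : ℕ} {g : WithZero (Multiplicative ℤ)} (h : v.intValuation r = g ^ k) :
    k ∣ (Associates.mk v.asIdeal).count (Associates.mk (Ideal.span {r})).factors := by
  have hlog := congrArg WithZero.log h
  rw [v.intValuation_if_neg hr, WithZero.log_exp, WithZero.log_pow, nsmul_eq_mul] at hlog
  exact Int.natCast_dvd_natCast.mp (dvd_neg.mp ⟨WithZero.log g, hlog⟩)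

theorem exists_span_singleton_eq_pow {r : R} {k : ℕ} (hk : k ≠ 0)
    (h : ∀ v : HeightOneSpectrum R, ∃ g, v.intValuation r = g ^ k) :
    ∃ J : Ideal R, Ideal.span {r} = J ^ k := by
  rcases eq_or_ne r 0 with rfl | hr
  · exact ⟨⊥, by simp [hk]⟩
  have hspan : Associates.mk (Ideal.span {r}) ≠ 0 := by simpa using hr
  obtain ⟨J, hJ⟩ := Associates.is_pow_of_dvd_count (k := k) hspan fun P hP ↦ by
    obtain ⟨P, rfl⟩ := Associates.mk_surjective P
    have hP' : Irreducible P := Associates.irreducible_mk.mp hP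
    let v : HeightOneSpectrum R := ⟨P, Ideal.isPrime_of_prime hP'.prime, hP'.ne_zero⟩
    obtain ⟨g, hg⟩ := h v
    exact dvd_count_factors_of_intValuation_eq_pow (v := v) hr hg
  obtain ⟨J, rfl⟩ := Associates.mk_surjective J
  rw [← Associates.mk_pow, Associates.mk_eq_mk_iff_associated, associated_iff_eq] at hJ
  exact ⟨J, hJ⟩

theorem classGroup_mk0_pow_eq_one {J : (Ideal R)⁰} {r : R} {k : ℕ}
    (h : Ideal.span {r} = (J : Ideal R) ^ k) : ClassGroup.mk0 J ^ k = 1 := by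
  rw [← map_pow]
  exact (ClassGroup.mk0_eq_one_iff (J ^ k).2).mpr ⟨r, h.symm⟩

end Dedekind

section Valuation

variable {R Γ₀ : Type*} [CommRing R] [LinearOrderedCommGroupWithZero Γ₀] {v : Valuation R Γ₀}

theorem isSquare_of_pow_three_eq_sq {G₀ : Type*} [CommGroupWithZero G₀] {s t : G₀}
    (h : t ^ 3 = s ^ 2) : IsSquare t := by
  rcases eq_or_ne t 0 with rfl | ht
  · exact .zero
  · refine isSquare_iff_exists_sq t |>.mpr ⟨s / t, ?_⟩
    rw [div_pow, ← h, pow_succ' t 2, mul_div_cancel_right₀ _ (pow_ne_zero 2 ht)]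

theorem lt_of_pow_three_eq_sq {s t : Γ₀} (h : t ^ 3 = s ^ 2) (hs : s < 1) (hs0 : s ≠ 0) :
    s < t := by
  refine lt_of_pow_lt_pow_left₀ 3 zero_le ?_
  rw [h]
  exact pow_lt_pow_right_of_lt_one₀ (zero_lt_iff.mpr hs0) hs (by norm_num)

theorem valuation_mul_lt_one_of_right (hv : ∀ r, v r ≤ 1) {x : R} (hx : v x < 1) (y : R) :
    v (y * x) < 1 := by
  rw [map_mul]
  exact mul_lt_one_of_nonneg_of_lt_one_right (hv y) zero_le hx

theorem valuation_eq_one_of_isCoprime (hv : ∀ r, v r ≤ 1) {x y : R} (hxy : IsCoprime x y)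
    (hx : v x < 1) : v y = 1 := by
  obtain ⟨c, d, h⟩ := hxy
  refine (hv y).antisymm (not_lt.mp fun hy ↦ ?_)
  have h1 : v (c * x + d * y) < 1 :=
    v.map_add_lt (valuation_mul_lt_one_of_right hv hx c) (valuation_mul_lt_one_of_right hv hy d)
  rw [h, map_one] at h1
  exact h1.false

theorem exists_prime_dvd_valuation_lt_one [IsDomain R] [UniqueFactorizationMonoid R]
    (hv : ∀ r, v r ≤ 1) {x : R} (hx0 : x ≠ 0) (hx : v x < 1) :
    ∃ p, Prime p ∧ p ∣ x ∧ v p < 1 := by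
  induction x using UniqueFactorizationMonoid.induction_on_prime with
  | h₁ => exact absurd rfl hx0
  | h₂ u hu =>
    have hcop : IsCoprime u u := isCoprime_self.mpr hu
    exact absurd (valuation_eq_one_of_isCoprime hv hcop hx) hx.ne
  | h₃ x q hx0' hq ih =>
    rcases (hv q).lt_or_eq with hvq | hvq
    · exact ⟨q, hq, dvd_mul_right q x, hvq⟩
    · obtain ⟨p, hp, hpx, hvp⟩ := ih hx0' (by rwa [map_mul, hvq, one_mul] at hx)
      exact ⟨p, hp, hpx.mul_left q, hvp⟩

theorem valuation_three_mul_sq_lt_one (hv : ∀ r, v r ≤ 1) {x z : R} (hsub : v (x - z) < 1)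
    (hquad : v (x ^ 2 + x * z + z ^ 2) < 1) : v (3 * x ^ 2) < 1 := by
  have h : 3 * x ^ 2 = (x ^ 2 + x * z + z ^ 2) + (2 * x + z) * (x - z) := by ring
  rw [h]
  exact v.map_add_lt hquad (valuation_mul_lt_one_of_right hv hsub _)

theorem valuation_sub_mul_eq_of_pow_three_eq_sq {x c w p : R} (hw : v w ^ 3 = v p ^ 2)
    (hp : v p < 1) (hx : v x ≤ v p) (hc : v c = 1) : v (x - c * w) = v w := by
  have hcw : v (c * w) = v w := by rw [map_mul, hc, one_mul]
  rcases eq_or_ne (v p) 0 with hp0 | hp0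
  · have hw0 : v w = 0 := by simpa [hp0] using hw
    have hx0 : v x = 0 := le_zero_iff.mp (hp0 ▸ hx)
    exact (le_zero_iff.mp (v.map_sub_le hx0.le (hcw.trans hw0).le)).trans hw0.symm
  · rw [← hcw]
    exact v.map_sub_eq_of_lt_right
      (hcw ▸ hx.trans_lt (lt_of_pow_three_eq_sq hw hp hp0))

end Valuation

/-- The integral equation of a rational point `(a / e², b / e³)` of the curve `y² = x³ - m`, with
denominators cleared; it makes sense in every commutative ring. -/
def MordellEquation {A : Type*} [CommRing A] (m a e b : A) : Prop :=
  b ^ 2 = a ^ 3 - m * e ^ 6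

theorem exists_mordellEquation_of_sq_eq {m a e : ℤ} {x y : ℚ} (hxy : y ^ 2 = x ^ 3 - m)
    (he : e ≠ 0) (hx : x = a / (e : ℚ) ^ 2) : ∃ b : ℤ, MordellEquation m a e b := by
  have he' : (e : ℚ) ≠ 0 := Int.cast_ne_zero.mpr he
  have hsq : IsSquare ((a ^ 3 - m * e ^ 6 : ℤ) : ℚ) := by
    refine isSquare_iff_exists_sq _ |>.mpr ⟨y * e ^ 3, ?_⟩
    rw [mul_pow, hxy, hx]
    push_cast
    field_simp
  obtain ⟨b, hb⟩ := isSquare_iff_exists_sq _ |>.mp (Rat.isSquare_intCast_iff.mp hsq)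
  exact ⟨b, hb.symm⟩

theorem zmod_nine_eq_one_or_neg_one_of_pow_three_eq :
    ∀ a e m : ZMod 9, a ^ 3 = m * e ^ 6 → 3 * a ≠ 0 → m = 1 ∨ m = -1 := by
  decide

namespace MordellEquation

section CommRing

variable {A : Type*} [CommRing A] {m a e b p : A}

theorem map {B : Type*} [CommRing B] (h : MordellEquation m a e b) (f : A →+* B) :
    MordellEquation (f m) (f a) (f e) (f b) := by
  simpa only [MordellEquation, map_sub, map_mul, map_pow] using congrArg f h

theorem factorization {ω : A} (h : MordellEquation (ω ^ 3) a e b) :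
    (a - e ^ 2 * ω) * (a ^ 2 + a * (e ^ 2 * ω) + (e ^ 2 * ω) ^ 2) = b ^ 2 := by
  rw [MordellEquation] at h
  rw [h]
  ring

theorem not_dvd_of_isCoprime (h : MordellEquation m a e b) (hae : IsCoprime a e) (hp : Prime p)
    (hpb : p ∣ b) : ¬ p ∣ e := fun hpe ↦ by
  rw [MordellEquation] at h
  have hpa : p ∣ a ^ 3 := by
    rw [← sub_add_cancel (a ^ 3) (m * e ^ 6), ← h]
    exact dvd_add (dvd_pow hpb two_ne_zero) ((dvd_pow hpe (by norm_num)).mul_left m)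
  exact hp.not_isUnit (hae.isUnit_of_dvd' (hp.dvd_of_dvd_pow hpa) hpe)

theorem sq_dvd [IsDomain A] (h : MordellEquation m a e b) (hp : Prime p) (hpe : ¬ p ∣ e)
    (hpa : p ∣ a) (hpb : p ∣ b) : p ^ 2 ∣ m := by
  rw [MordellEquation] at h
  have hpm : p ^ 2 ∣ m * e ^ 6 := by
    rw [← sub_sub_cancel (a ^ 3) (m * e ^ 6), ← h]
    exact dvd_sub ((pow_dvd_pow_of_dvd hpa 2).trans (pow_dvd_pow a (by norm_num)))
      (pow_dvd_pow_of_dvd hpb 2)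
  exact hp.pow_dvd_of_dvd_mul_right 2 (mt hp.dvd_of_dvd_pow hpe) hpm

end CommRing

variable {m a e b : ℤ}

theorem zmod_nine_eq_one_or_neg_one (h : MordellEquation m a e b) (hb : 3 ∣ b) (ha : ¬ 3 ∣ a) :
    (m : ZMod 9) = 1 ∨ (m : ZMod 9) = -1 := by
  refine zmod_nine_eq_one_or_neg_one_of_pow_three_eq a e m (sub_eq_zero.mp ?_) fun h0 ↦ ha ?_
  · have h9 : (9 : ℤ) ∣ a ^ 3 - m * e ^ 6 := h ▸ pow_dvd_pow_of_dvd hb 2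
    exact_mod_cast (ZMod.intCast_zmod_eq_zero_iff_dvd _ 9).mpr h9
  · have h9 : (9 : ℤ) ∣ 3 * a := (ZMod.intCast_zmod_eq_zero_iff_dvd _ 9).mp (by exact_mod_cast h0)
    omega

theorem dvd_of_dvd_three_mul_sq (h : MordellEquation m a e b) (h1 : (m : ZMod 9) ≠ 1)
    (hneg1 : (m : ZMod 9) ≠ -1) {p : ℤ} (hp : Prime p) (hpb : p ∣ b) (hpa : p ∣ 3 * a ^ 2) :
    p ∣ a := by
  refine (hp.dvd_or_dvd hpa).elim (fun hp3 ↦ ?_) hp.dvd_of_dvd_pow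
  have hassoc : Associated p 3 := hp.associated_of_dvd Int.prime_three hp3
  rw [hassoc.dvd_iff_dvd_left] at hpb ⊢
  by_contra ha
  exact (h.zmod_nine_eq_one_or_neg_one hpb ha).elim h1 hneg1

theorem ne_zero (h : MordellEquation m a e b) (hcf : ∀ d : ℤ, d ^ 3 ∣ m → IsUnit d)
    (h1 : (m : ZMod 9) ≠ 1) (hneg1 : (m : ZMod 9) ≠ -1) (hae : IsCoprime a e) : b ≠ 0 := by
  rintro rfl
  rw [MordellEquation, zero_pow two_ne_zero] at h
  have ha3 : a ^ 3 = m * e ^ 6 := sub_eq_zero.mp h.symm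
  have ha : IsUnit a := hcf a ((hae.pow (m := 3) (n := 6)).dvd_of_dvd_mul_right (dvd_of_eq ha3))
  have he : IsUnit e := (hae.pow_left (m := 3)).isUnit_of_dvd'
    (ha3 ▸ (dvd_pow_self e (by norm_num)).mul_left m) dvd_rfl
  have he6 : e ^ 6 = 1 := by rcases Int.isUnit_iff.mp he with rfl | rfl <;> rfl
  rw [he6, mul_one] at ha3
  subst ha3
  rcases Int.isUnit_iff.mp ha with rfl | rfl
  · exact h1 (by norm_num)
  · exact hneg1 (by norm_num)

end MordellEquation

section ValuationOfPoint

variable {R Γ₀ : Type*} [CommRing R] [LinearOrderedCommGroupWithZero Γ₀] {v : Valuation R Γ₀}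
  {m a e b : ℤ} {ω : R}

theorem valuation_intCast_eq_one_of_not_dvd (hv : ∀ r, v r ≤ 1) {p n : ℤ} (hp : Prime p)
    (hvp : v (p : R) < 1) (hpn : ¬ p ∣ n) : v (n : R) = 1 :=
  valuation_eq_one_of_isCoprime hv ((hp.coprime_iff_not_dvd.mpr hpn).intCast) hvp

theorem valuation_pow_three_eq_sq (hv : ∀ r, v r ≤ 1) (hcf : ∀ d : ℤ, d ^ 3 ∣ m → IsUnit d)
    (hω : ω ^ 3 = (m : R)) {p : ℤ} (hp : Prime p) (hvp : v (p : R) < 1) (hpm : p ^ 2 ∣ m) :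
    v ω ^ 3 = v (p : R) ^ 2 := by
  obtain ⟨u, rfl⟩ := hpm
  have hpu : ¬ p ∣ u := fun hpu ↦
    hp.not_isUnit (hcf p (by rw [pow_succ]; exact mul_dvd_mul_left _ hpu))
  rw [← map_pow, hω, Int.cast_mul, map_mul, valuation_intCast_eq_one_of_not_dvd hv hp hvp hpu,
    mul_one, Int.cast_pow, map_pow]

theorem MordellEquation.isSquare_valuation_of_dvd (h : MordellEquation m a e b)
    (hv : ∀ r, v r ≤ 1) (hcf : ∀ d : ℤ, d ^ 3 ∣ m → IsUnit d) (hω : ω ^ 3 = (m : R)) {p : ℤ}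
    (hp : Prime p) (hvp : v (p : R) < 1) (hpe : ¬ p ∣ e) (hpa : p ∣ a) (hpb : p ∣ b) :
    IsSquare (v ((a : R) - (e : R) ^ 2 * ω)) := by
  have hvω : v ω ^ 3 = v (p : R) ^ 2 :=
    valuation_pow_three_eq_sq hv hcf hω hp hvp (h.sq_dvd hp hpe hpa hpb)
  have hva : v (a : R) ≤ v (p : R) := by
    obtain ⟨c, rfl⟩ := hpa
    rw [Int.cast_mul, map_mul]
    exact mul_le_of_le_one_right' (hv _)
  have hve : v ((e : R) ^ 2) = 1 := by
    rw [map_pow, valuation_intCast_eq_one_of_not_dvd hv hp hvp hpe, one_pow]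
  rw [valuation_sub_mul_eq_of_pow_three_eq_sq hvω hvp hva hve]
  exact isSquare_of_pow_three_eq_sq hvω

theorem MordellEquation.isSquare_valuation (h : MordellEquation m a e b) (hv : ∀ r, v r ≤ 1)
    (hcf : ∀ d : ℤ, d ^ 3 ∣ m → IsUnit d) (h1 : (m : ZMod 9) ≠ 1) (hneg1 : (m : ZMod 9) ≠ -1)
    (hω : ω ^ 3 = (m : R)) (hae : IsCoprime a e) :
    IsSquare (v ((a : R) - (e : R) ^ 2 * ω)) := by
  have hR : MordellEquation (ω ^ 3) (a : R) (e : R) (b : R) := hω ▸ h.map (Int.castRingHom R)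
  have hvfactor := congrArg v hR.factorization
  rw [map_mul, map_pow v (b : R)] at hvfactor
  obtain hquad | hquad := (hv ((a : R) ^ 2 + a * (e ^ 2 * ω) + (e ^ 2 * ω) ^ 2)).eq_or_lt
  · exact isSquare_iff_exists_sq _ |>.mpr ⟨v (b : R), by rw [← hvfactor, hquad, mul_one]⟩
  obtain hsub | hsub := (hv ((a : R) - e ^ 2 * ω)).eq_or_lt
  · exact hsub ▸ .one
  have hvb : v (b : R) < 1 := by
    rw [← pow_lt_one_iff two_ne_zero, ← hvfactor, ← map_mul]
    exact valuation_mul_lt_one_of_right hv hquad _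
  obtain ⟨p, hp, hpb, hvp⟩ := exists_prime_dvd_valuation_lt_one
    (v := v.comap (Int.castRingHom R)) (fun n ↦ hv n) (h.ne_zero hcf h1 hneg1 hae) hvb
  have hpa : p ∣ 3 * a ^ 2 := by
    by_contra hpa
    refine (valuation_three_mul_sq_lt_one hv hsub hquad).ne ?_
    exact_mod_cast valuation_intCast_eq_one_of_not_dvd hv hp hvp hpa
  exact h.isSquare_valuation_of_dvd hv hcf hω hp hvp (h.not_dvd_of_isCoprime hae hp hpb)
    (h.dvd_of_dvd_three_mul_sq h1 hneg1 hp hpb hpa) hpb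

end ValuationOfPoint

theorem ideal_square_of_point_general {R : Type*} [CommRing R] [IsDedekindDomain R] {m : ℤ}
    (hcf : ∀ d : ℤ, d ^ 3 ∣ m → IsUnit d) (h1 : (m : ZMod 9) ≠ 1) (hneg1 : (m : ZMod 9) ≠ -1)
    {ω : R} (hω : ω ^ 3 = (m : R)) {x y : ℚ} (hxy : y ^ 2 = x ^ 3 - m) {a e : ℤ} (he : e ≠ 0)
    (hx : x = a / (e : ℚ) ^ 2) (hae : IsCoprime a e) :
    ∃ 𝔞 : Ideal R, Ideal.span {(a : R) - (e : R) ^ 2 * ω} = 𝔞 ^ 2 ∧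
      ∀ h0 : 𝔞 ≠ 0, ClassGroup.mk0 ⟨𝔞, mem_nonZeroDivisors_of_ne_zero h0⟩ ^ 2 = 1 := by
  obtain ⟨b, hb⟩ := exists_mordellEquation_of_sq_eq hxy he hx
  obtain ⟨𝔞, h𝔞⟩ := exists_span_singleton_eq_pow two_ne_zero fun v ↦
    isSquare_iff_exists_sq _ |>.mp
      (hb.isSquare_valuation v.intValuation_le_one hcf h1 hneg1 hω hae)
  exact ⟨𝔞, h𝔞, fun h0 ↦ classGroup_mk0_pow_eq_one h𝔞⟩

/-- For cubefree `m ≢ 0, ±1 (mod 9)` and an affine rational point `(x,y)`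
on `y² = x³ − m` with `x = a/e²` in lowest terms, the ideal `(a − e²ω)` of `O_K` is the
square of an ideal `𝔞`, whose class in `Cl(K)` has order dividing 2. -/
theorem ideal_square_of_point
    (m : ℤ) (hm : ¬ ∃ k : ℤ, k ^ 3 = m) (hcf : ∀ d : ℤ, d ^ 3 ∣ m → IsUnit d)
    (h9 : (m : ZMod 9) ≠ 0 ∧ (m : ZMod 9) ≠ 1 ∧ (m : ZMod 9) ≠ -1)
    (K : Type*) [Field K] [NumberField K] (hK : Module.finrank ℚ K = 3)
    (ω : 𝓞 K) (hω : ω ^ 3 = (m : 𝓞 K))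
    (x y : ℚ) (hxy : y ^ 2 = x ^ 3 - (m : ℚ))
    (a e : ℤ) (he : e ≠ 0) (hx : x = (a : ℚ) / (e : ℚ) ^ 2) (hae : IsCoprime a e) :
    ∃ 𝔞 : Ideal (𝓞 K),
      Ideal.span {(a : 𝓞 K) - (e : 𝓞 K) ^ 2 * ω} = 𝔞 ^ 2 ∧
      ∀ h0 : 𝔞 ≠ 0,
        (ClassGroup.mk0 ⟨𝔞, mem_nonZeroDivisors_of_ne_zero h0⟩) ^ 2 = 1 :=
  ideal_square_of_point_general hcf h9.2.1 h9.2.2 hω hxy he hx hae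
end

section
/- Let m be a cubefree integer with m ≢ 0, ±1 (mod 9), not a perfect cube. Let P, Q be affine rational points on E_m such that P + Q (in the group law) is also affine. Write the x-coordinates of P, Q and P + Q as a/e², c/f², g/h² respectively, with coprime integer pairs (a,e), (c,f), (g,h), and let 𝔞, 𝔟, 𝔠 be ideals of O_K with 𝔞² = (a − e²ω)O_K, 𝔟² = (c − f²ω)O_K, 𝔠² = (g − h²ω)O_K. Then in the ideal class group Cl(K) one has [𝔠] = [𝔞]·[𝔟]; consequently the assignment P ↦ [𝔞] (and the point at infinity to the trivial class) defines a group homomorphism κ : E_m(ℚ) → Cl(K)[2]. -/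
open NumberField

/-!
Let `(ω, η)` be a 2-torsion point, such as `(ω, 0)` on `E_m`, so that the Weierstrass polynomial at
`x = ω` is `(y - η)²`.
If `P + Q = S` then the line through `P`, `Q` and `-S` meets the curve exactly at these points, so
restricting the Weierstrass polynomial to the line and evaluating at `ω` shows that
`(x(P) - ω)(x(Q) - ω)(x(S) - ω)` is a square. Clearing square denominators, the product of the
generators of `𝔞²`, `𝔟²`, `𝔠²` is the square of an element of the integrally closed ring, so
`𝔞𝔟𝔠` is principal; since `[𝔠]² = 1`, this says `[𝔠] = [𝔞][𝔟]`.
-/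

section TwoTorsion

open WeierstrassCurve.Affine

theorem eval_addPolynomial_eq_sq_of_negY_eq {A : Type*} [CommRing A] {W : WeierstrassCurve.Affine A}
    {ω η : A} (hT : W.Equation ω η) (hη : W.negY ω η = η) (x y ℓ : A) :
    (W.addPolynomial x y ℓ).eval ω = ((linePolynomial x y ℓ).eval ω - η) ^ 2 := by
  rw [equation_iff] at hT
  rw [negY] at hη
  simp only [addPolynomial_eq, linePolynomial, Cubic.toPoly, Polynomial.eval_neg,
    Polynomial.eval_add, Polynomial.eval_sub, Polynomial.eval_mul, Polynomial.eval_pow,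
    Polynomial.eval_C, Polynomial.eval_X]
  linear_combination hT - (ℓ * (ω - x) + y - η) * hη

variable {F : Type*} [Field F] [DecidableEq F] {W : WeierstrassCurve.Affine F}
  {x₁ y₁ x₂ y₂ x₃ y₃ : F} {h₁ : W.Nonsingular x₁ y₁} {h₂ : W.Nonsingular x₂ y₂}
  {h₃ : W.Nonsingular x₃ y₃}

theorem addPolynomial_slope_of_add_eq_some
    (hadd : Point.some x₁ y₁ h₁ + Point.some x₂ y₂ h₂ = Point.some x₃ y₃ h₃) :
    W.addPolynomial x₁ y₁ (W.slope x₁ x₂ y₁ y₂) =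
      -((.X - .C x₁) * (.X - .C x₂) * (.X - .C x₃)) := by
  have hxy : ¬(x₁ = x₂ ∧ y₁ = W.negY x₂ y₂) := fun ⟨hx, hy⟩ ↦
    Point.some_ne_zero h₃ (hadd.symm.trans (Point.add_of_Y_eq hx hy))
  rw [Point.add_some hxy, Point.some.injEq] at hadd
  rw [addPolynomial_slope h₁.1 h₂.1 hxy, hadd.1]

theorem isSquare_mul_sub_of_add_eq_some {K : Type*} [CommRing K] [Algebra F K] {ω η : K}
    (hT : (W.baseChange K).Equation ω η) (hη : (W.baseChange K).negY ω η = η)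
    (hadd : Point.some x₁ y₁ h₁ + Point.some x₂ y₂ h₂ = Point.some x₃ y₃ h₃) :
    IsSquare ((algebraMap F K x₁ - ω) * (algebraMap F K x₂ - ω) * (algebraMap F K x₃ - ω)) := by
  have hsq := eval_addPolynomial_eq_sq_of_negY_eq hT hη (algebraMap F K x₁) (algebraMap F K y₁)
    (algebraMap F K (W.slope x₁ x₂ y₁ y₂))
  rw [baseChange, WeierstrassCurve.baseChange, map_addPolynomial,
    addPolynomial_slope_of_add_eq_some hadd] at hsq
  simp only [Polynomial.map_neg, Polynomial.map_mul, Polynomial.map_sub, Polynomial.map_X,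
    Polynomial.map_C, Polynomial.eval_neg, Polynomial.eval_mul, Polynomial.eval_sub,
    Polynomial.eval_X, Polynomial.eval_C] at hsq
  exact (isSquare_iff_exists_sq _).2 ⟨_, Eq.trans (by ring) hsq⟩

end TwoTorsion

theorem isSquare_mul_sub_sq_mul {A : Type*} [CommRing A] {x₁ x₂ x₃ a e c f g k ω : A}
    (hx₁ : x₁ * e ^ 2 = a) (hx₂ : x₂ * f ^ 2 = c) (hx₃ : x₃ * k ^ 2 = g)
    (hsq : IsSquare ((x₁ - ω) * (x₂ - ω) * (x₃ - ω))) :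
    IsSquare ((a - e ^ 2 * ω) * (c - f ^ 2 * ω) * (g - k ^ 2 * ω)) := by
  have hfactor : (a - e ^ 2 * ω) * (c - f ^ 2 * ω) * (g - k ^ 2 * ω) =
      (e * f * k) ^ 2 * ((x₁ - ω) * (x₂ - ω) * (x₃ - ω)) := by
    rw [← hx₁, ← hx₂, ← hx₃]
    ring
  exact hfactor ▸ (IsSquare.sq _).mul hsq

section ClassGroup

open nonZeroDivisors
open WeierstrassCurve.Affine (Point)

variable {R : Type*} [CommRing R]

theorem isSquare_of_isSquare_algebraMap {K : Type*} [Field K] [Algebra R K] [IsFractionRing R K]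
    [IsIntegrallyClosed R] {r : R} (hr : IsSquare (algebraMap R K r)) : IsSquare r := by
  obtain ⟨t, ht⟩ := (isSquare_iff_exists_sq _).1 hr
  obtain ⟨s, rfl⟩ : ∃ s : R, algebraMap R K s = t :=
    IsIntegrallyClosed.exists_algebraMap_eq_of_isIntegral_pow two_pos (ht ▸ isIntegral_algebraMap)
  rw [← map_pow] at ht
  exact (isSquare_iff_exists_sq _).2 ⟨s, IsFractionRing.injective R K ht⟩

variable [IsDedekindDomain R]

theorem mk0_eq_one_of_sq_eq_span_of_isSquare {I : (Ideal R)⁰} {r : R}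
    (hI : (I : Ideal R) ^ 2 = Ideal.span {r}) (hr : IsSquare r) : ClassGroup.mk0 I = 1 := by
  obtain ⟨s, rfl⟩ := (isSquare_iff_exists_sq _).1 hr
  rw [← Ideal.span_singleton_pow] at hI
  exact (ClassGroup.mk0_eq_one_iff I.2).2 ⟨s, pow_left_injective two_ne_zero hI⟩

theorem mk0_sq_eq_one_of_sq_eq_span {I : (Ideal R)⁰} {r : R}
    (hI : (I : Ideal R) ^ 2 = Ideal.span {r}) : ClassGroup.mk0 I ^ 2 = 1 := by
  rw [← map_pow]
  exact (ClassGroup.mk0_eq_one_iff (pow_mem I.2 2)).2 ⟨r, hI⟩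

theorem mk0_eq_mk0_mul_mk0_of_isSquare {𝔞 𝔟 𝔠 : (Ideal R)⁰} {α β γ : R}
    (h𝔞 : (𝔞 : Ideal R) ^ 2 = Ideal.span {α}) (h𝔟 : (𝔟 : Ideal R) ^ 2 = Ideal.span {β})
    (h𝔠 : (𝔠 : Ideal R) ^ 2 = Ideal.span {γ}) (hsq : IsSquare (α * β * γ)) :
    ClassGroup.mk0 𝔠 = ClassGroup.mk0 𝔞 * ClassGroup.mk0 𝔟 := by
  have hmul : ((𝔞 * 𝔟 * 𝔠 : (Ideal R)⁰) : Ideal R) ^ 2 = Ideal.span {α * β * γ} := by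
    simp only [Submonoid.coe_mul, mul_pow, h𝔞, h𝔟, h𝔠, Ideal.span_singleton_mul_span_singleton]
  have hone := mk0_eq_one_of_sq_eq_span_of_isSquare hmul hsq
  rw [map_mul, map_mul] at hone
  have hsq_one := mk0_sq_eq_one_of_sq_eq_span h𝔠
  rw [pow_two] at hsq_one
  exact mul_right_cancel (hsq_one.trans hone.symm)

theorem class_group_homomorphism_general
    {F : Type*} [Field F] [DecidableEq F] {K : Type*} [Field K] [Algebra F K]
    [Algebra R K] [IsFractionRing R K] {W : WeierstrassCurve.Affine F} {ω : R} {η : K}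
    (hT : (W.baseChange K).Equation (algebraMap R K ω) η)
    (hη : (W.baseChange K).negY (algebraMap R K ω) η = η)
    {x₁ y₁ x₂ y₂ x₃ y₃ : F} {h₁ : W.Nonsingular x₁ y₁} {h₂ : W.Nonsingular x₂ y₂}
    {h₃ : W.Nonsingular x₃ y₃}
    (hadd : Point.some x₁ y₁ h₁ + Point.some x₂ y₂ h₂ = Point.some x₃ y₃ h₃)
    {a e c f g k : R}
    (hx₁ : algebraMap F K x₁ * algebraMap R K e ^ 2 = algebraMap R K a)
    (hx₂ : algebraMap F K x₂ * algebraMap R K f ^ 2 = algebraMap R K c)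
    (hx₃ : algebraMap F K x₃ * algebraMap R K k ^ 2 = algebraMap R K g)
    {𝔞 𝔟 𝔠 : (Ideal R)⁰}
    (h𝔞 : (𝔞 : Ideal R) ^ 2 = Ideal.span {a - e ^ 2 * ω})
    (h𝔟 : (𝔟 : Ideal R) ^ 2 = Ideal.span {c - f ^ 2 * ω})
    (h𝔠 : (𝔠 : Ideal R) ^ 2 = Ideal.span {g - k ^ 2 * ω}) :
    ClassGroup.mk0 𝔠 = ClassGroup.mk0 𝔞 * ClassGroup.mk0 𝔟 := by
  refine mk0_eq_mk0_mul_mk0_of_isSquare h𝔞 h𝔟 h𝔠 (isSquare_of_isSquare_algebraMap (K := K) ?_)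
  simpa only [map_mul, map_sub, map_pow] using
    isSquare_mul_sub_sq_mul hx₁ hx₂ hx₃ (isSquare_mul_sub_of_add_eq_some hT hη hadd)

end ClassGroup

section CubeRoot

variable {K : Type*} [CommRing K] [Algebra ℚ K]

theorem equation_baseChange_Wm_zero {m : ℤ} {ω : K} (hω : ω ^ 3 = m) :
    ((Wm m).baseChange K).Equation ω 0 := by
  simp [WeierstrassCurve.Affine.equation_iff, WeierstrassCurve.baseChange, Wm, hω]

theorem negY_baseChange_Wm_zero (m : ℤ) (ω : K) : ((Wm m).baseChange K).negY ω 0 = 0 := by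
  simp [WeierstrassCurve.Affine.negY, WeierstrassCurve.baseChange, Wm]

theorem algebraMap_mul_intCast_sq_of_eq_div {R : Type*} [CommRing R] [Algebra R K] {x : ℚ}
    {a e : ℤ} (he : e ≠ 0) (hx : x = a / (e : ℚ) ^ 2) :
    algebraMap ℚ K x * algebraMap R K e ^ 2 = algebraMap R K a := by
  have hmul : x * (e : ℚ) ^ 2 = a := by rw [hx, div_mul_cancel₀ _ (by positivity)]
  simpa using congrArg (algebraMap ℚ K) hmul

end CubeRoot

/-- For cubefree `m ≢ 0, ±1 (mod 9)`: if `P`, `Q` and `P + Q` are affine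
rational points on `E_m` with x-coordinates `a/e²`, `c/f²`, `g/k²` in lowest terms, and
`𝔞² = (a − e²ω)`, `𝔟² = (c − f²ω)`, `𝔠² = (g − k²ω)` as ideals of `O_K`, then
`[𝔠] = [𝔞]·[𝔟]` in `Cl(K)`; consequently `P ↦ [𝔞]` defines a homomorphism
`κ : E_m(ℚ) → Cl(K)[2]`. -/
theorem class_group_homomorphism
    (m : ℤ) (hm : ¬ ∃ k : ℤ, k ^ 3 = m) (hcf : ∀ d : ℤ, d ^ 3 ∣ m → IsUnit d)
    (h9 : (m : ZMod 9) ≠ 0 ∧ (m : ZMod 9) ≠ 1 ∧ (m : ZMod 9) ≠ -1)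
    (K : Type*) [Field K] [NumberField K] (hK : Module.finrank ℚ K = 3)
    (ω : 𝓞 K) (hω : ω ^ 3 = (m : 𝓞 K))
    (P Q : (Wm m).Point)
    (x₁ y₁ x₂ y₂ x₃ y₃ : ℚ)
    (h₁ : (Wm m).Nonsingular x₁ y₁) (h₂ : (Wm m).Nonsingular x₂ y₂)
    (h₃ : (Wm m).Nonsingular x₃ y₃)
    (hP : P = WeierstrassCurve.Affine.Point.some x₁ y₁ h₁)
    (hQ : Q = WeierstrassCurve.Affine.Point.some x₂ y₂ h₂)
    (hPQ : P + Q = WeierstrassCurve.Affine.Point.some x₃ y₃ h₃)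
    (a e c f g k : ℤ) (he : e ≠ 0) (hf : f ≠ 0) (hk : k ≠ 0)
    (hx₁ : x₁ = (a : ℚ) / (e : ℚ) ^ 2) (hx₂ : x₂ = (c : ℚ) / (f : ℚ) ^ 2)
    (hx₃ : x₃ = (g : ℚ) / (k : ℚ) ^ 2)
    (hae : IsCoprime a e) (hcf' : IsCoprime c f) (hgk : IsCoprime g k)
    (𝔞 𝔟 𝔠 : Ideal (𝓞 K))
    (h𝔞 : 𝔞 ^ 2 = Ideal.span {(a : 𝓞 K) - (e : 𝓞 K) ^ 2 * ω})
    (h𝔟 : 𝔟 ^ 2 = Ideal.span {(c : 𝓞 K) - (f : 𝓞 K) ^ 2 * ω})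
    (h𝔠 : 𝔠 ^ 2 = Ideal.span {(g : 𝓞 K) - (k : 𝓞 K) ^ 2 * ω})
    (h𝔞0 : 𝔞 ≠ 0) (h𝔟0 : 𝔟 ≠ 0) (h𝔠0 : 𝔠 ≠ 0) :
    ClassGroup.mk0 ⟨𝔠, mem_nonZeroDivisors_of_ne_zero h𝔠0⟩ =
      ClassGroup.mk0 ⟨𝔞, mem_nonZeroDivisors_of_ne_zero h𝔞0⟩ *
        ClassGroup.mk0 ⟨𝔟, mem_nonZeroDivisors_of_ne_zero h𝔟0⟩ := by
  subst hP hQ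
  have hω' : algebraMap (𝓞 K) K ω ^ 3 = m := by rw [← map_pow, hω, map_intCast]
  exact class_group_homomorphism_general (equation_baseChange_Wm_zero hω')
    (negY_baseChange_Wm_zero m _) hPQ (algebraMap_mul_intCast_sq_of_eq_div he hx₁)
    (algebraMap_mul_intCast_sq_of_eq_div hf hx₂) (algebraMap_mul_intCast_sq_of_eq_div hk hx₃)
    h𝔞 h𝔟 h𝔠
end

section
/- Let m be a cubefree integer with m ≢ 0, ±1 (mod 9), not a perfect cube, let b be a nonzero integer, and let E' be the elliptic curve y² = x³ − mb³. Let P = (x, y) be a rational point on E' with P ∉ 2E'(ℚ), write x = r/s² with coprime integers r, s, and assume gcd(r, b) = 1. Set α = r − s²bω ∈ O_K. Then α is not a square in K^×, so K(√α) is a quadratic extension of K, and every prime ideal of O_K not lying above 2 is unramified in K(√α). -/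
open NumberField

/-- The quadratic twist `E' : y² = x³ − mb³` over `ℚ` in Weierstrass form. -/
def Wmb (m b : ℤ) : WeierstrassCurve.Affine ℚ := ⟨0, 0, 0, 0, -((m : ℚ) * (b : ℚ) ^ 3)⟩

/-!
**Not a square.** If `x - e = β²` in `F(e)`, `e³ = d`, then comparing coefficients in
`β = a₀ + a₁ e + a₂ e²` shows that `Q = (a₁ / a₂, 1 / a₂)` lies on `y² = x³ - d` and that `2Q` has
abscissa `x`; hence a point with abscissa `x` is `2Q` or `2(-Q)`.

**Unramified outside 2.** It suffices that at each prime `𝔭` the element `α = r - cω`, `c = s²b`, is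
a `𝔭`-unit up to squares: an extension generated by the square root of a `𝔭`-unit is unramified at
`𝔭 ∤ 2`, as its different divides `2√u`. Clearing denominators in the equation of the curve gives
`α β = t²` with `β = r² + rcω + (cω)²` and `t ∈ ℤ`, so only primes dividing both `α` and `β` matter.
Let `p` be the rational prime below such a `𝔭`. From `3r² ∈ (α, β)`, and modulo 9 when `p = 3`, one
gets `p ∣ r`, then `p² ∥ m`, and `α (ω / p)²` is a `𝔭`-unit.
-/

section PureExtension

open Polynomial Module

lemma pow_ne_algebraMap_mul_pow {R K : Type*} [CommRing R] [IsIntegrallyClosed R] [Field K]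
    [Algebra R K] [IsFractionRing R K] {n : ℕ} (hn : n ≠ 0) {m : R} (hm : ∀ k : R, k ^ n ≠ m)
    {c : K} (hc : c ≠ 0) (q : K) : q ^ n ≠ algebraMap R K m * c ^ n := by
  intro h
  have hquot : (q / c) ^ n = algebraMap R K m := by
    rw [div_pow, h, mul_div_cancel_right₀ _ (pow_ne_zero n hc)]
  obtain ⟨k, hk⟩ := IsIntegrallyClosed.exists_algebraMap_eq_of_isIntegral_pow
    (Nat.pos_of_ne_zero hn) (hquot ▸ isIntegral_algebraMap : IsIntegral R ((q / c) ^ n))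
  apply hm k
  apply IsFractionRing.injective R K
  rw [map_pow, hk, hquot]

variable {F E : Type*} [Field F] [Field E] [Algebra F E]

lemma natDegree_minpoly_of_pow_eq {n : ℕ} (hn : n.Prime) {a : F} {x : E}
    (hx : x ^ n = algebraMap F E a) (ha : ∀ b : F, b ^ n ≠ a) :
    (minpoly F x).natDegree = n := by
  have hmin : X ^ n - C a = minpoly F x :=
    minpoly.eq_of_irreducible_of_monic (X_pow_sub_C_irreducible_of_prime hn ha) (by simp [hx])
      (monic_X_pow_sub_C a hn.ne_zero)
  rw [← hmin, natDegree_X_pow_sub_C]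

lemma finrank_of_pow_eq_of_adjoin_eq_top {n : ℕ} (hn : n.Prime) {a : F} {x : E}
    (hx : x ^ n = algebraMap F E a) (ha : ∀ b : F, b ^ n ≠ a) (hgen : Algebra.adjoin F {x} = ⊤) :
    finrank F E = n := by
  have hint : IsIntegral F x := .of_pow hn.pos (hx ▸ isIntegral_algebraMap)
  rw [(PowerBasis.ofAdjoinEqTop hint hgen).finrank, PowerBasis.ofAdjoinEqTop_dim,
    natDegree_minpoly_of_pow_eq hn hx ha]

lemma exists_eq_add_add_sq {e : E} (he : (minpoly F e).natDegree = 3) (hE : finrank F E = 3)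
    (x : E) : ∃ a₀ a₁ a₂ : F,
      x = algebraMap F E a₀ + algebraMap F E a₁ * e + algebraMap F E a₂ * e ^ 2 := by
  have hli := linearIndependent_pow (K := F) e
  rw [he] at hli
  let B := basisOfLinearIndependentOfCardEqFinrank hli (by simp [hE])
  refine ⟨B.repr x 0, B.repr x 1, B.repr x 2, ?_⟩
  conv_lhs => rw [← B.sum_repr x]
  simp [Fin.sum_univ_three, B, Algebra.smul_def]

lemma eq_zero_of_add_add_sq_eq_zero {e : E} (he : (minpoly F e).natDegree = 3) {a₀ a₁ a₂ : F}
    (h : algebraMap F E a₀ + algebraMap F E a₁ * e + algebraMap F E a₂ * e ^ 2 = 0) :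
    a₀ = 0 ∧ a₁ = 0 ∧ a₂ = 0 := by
  have hli := linearIndependent_pow (K := F) e
  rw [he] at hli
  have hcoeff := Fintype.linearIndependent_iff.mp hli ![a₀, a₁, a₂] (by
    simpa [Fin.sum_univ_three, Algebra.smul_def] using h)
  exact ⟨hcoeff 0, hcoeff 1, hcoeff 2⟩

/- The last equation says that doubling `(u, z)` on `Y² = X³ - d` gives a point with `X = x`. -/
lemma exists_halving_of_sub_eq_sq (hE : finrank F E = 3) {d : F} {e : E}
    (he : e ^ 3 = algebraMap F E d) (hd : ∀ q : F, q ^ 3 ≠ d) {x : F} {β : E}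
    (hβ : algebraMap F E x - e = β ^ 2) :
    ∃ u z : F, z ≠ 0 ∧ z ^ 2 = u ^ 3 - d ∧ 9 * u ^ 4 = 4 * z ^ 2 * (x + 2 * u) := by
  have hdeg := natDegree_minpoly_of_pow_eq Nat.prime_three he hd
  obtain ⟨a₀, a₁, a₂, rfl⟩ := exists_eq_add_add_sq hdeg hE β
  obtain ⟨coeff₀, coeff₁, coeff₂⟩ : a₀ ^ 2 + 2 * d * a₁ * a₂ - x = 0 ∧
      2 * a₀ * a₁ + d * a₂ ^ 2 + 1 = 0 ∧ a₁ ^ 2 + 2 * a₀ * a₂ = 0 := by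
    apply eq_zero_of_add_add_sq_eq_zero hdeg
    simp only [map_sub, map_add, map_mul, map_pow, map_ofNat, map_one]
    linear_combination -hβ -
      (2 * algebraMap F E a₁ * algebraMap F E a₂ + algebraMap F E a₂ ^ 2 * e) * he
  have ha₂ : a₂ ≠ 0 := by
    rintro rfl
    obtain rfl : a₁ = 0 := by simpa using coeff₂
    simp at coeff₁
  refine ⟨a₁ / a₂, 1 / a₂, by simpa using ha₂, ?_, ?_⟩
  · field_simp
    linear_combination a₂ * coeff₁ - a₁ * coeff₂
  · field_simp
    linear_combination 4 * a₂ ^ 2 * coeff₀ - 8 * a₁ * a₂ * coeff₁ +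
      (9 * a₁ ^ 2 - 2 * a₀ * a₂) * coeff₂

end PureExtension

section Mordell

open WeierstrassCurve.Affine

/-- The affine Mordell curve `y² = x³ - d`; `Wmb m b` is the case `d = m b³`. -/
def mordellCurve {F : Type*} [Field F] (d : F) : WeierstrassCurve.Affine F := ⟨0, 0, 0, 0, -d⟩

variable {F : Type*} [Field F] {d : F}

lemma mordellCurve_equation_iff {x y : F} :
    (mordellCurve d).Equation x y ↔ y ^ 2 = x ^ 3 - d := by
  rw [equation_iff]
  simp [mordellCurve, sub_eq_add_neg]

lemma ne_negY_mordellCurve (h2 : (2 : F) ≠ 0) (u : F) {z : F} (hz : z ≠ 0) :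
    z ≠ (mordellCurve d).negY u z := by
  intro h
  apply mul_ne_zero h2 hz
  simp only [negY, mordellCurve] at h
  linear_combination h

lemma mordellCurve_nonsingular (h2 : (2 : F) ≠ 0) {u z : F} (hz : z ≠ 0)
    (huz : z ^ 2 = u ^ 3 - d) : (mordellCurve d).Nonsingular u z := by
  rw [nonsingular_iff]
  refine ⟨mordellCurve_equation_iff.mpr huz, Or.inr ?_⟩
  exact ne_negY_mordellCurve h2 u hz

variable [DecidableEq F]

lemma exists_eq_two_nsmul_of_addX_eq {W : WeierstrassCurve.Affine F} {u z x y : F}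
    (hQ : W.Nonsingular u z) (hz : z ≠ W.negY u z) (hP : W.Nonsingular x y)
    (hx : x = W.addX u u (W.slope u u z z)) :
    ∃ Q : W.Point, Point.some x y hP = 2 • Q := by
  rcases Point.X_eq_iff.mp hx with h | h
  · exact ⟨.some u z hQ, by rw [two_nsmul, Point.add_self_of_Y_ne hz, h]⟩
  · exact ⟨-.some u z hQ, by rw [smul_neg, two_nsmul, Point.add_self_of_Y_ne hz, h]⟩

lemma mordellCurve_addX_slope_self (h2 : (2 : F) ≠ 0) (u : F) {z : F} (hz : z ≠ 0) :
    (mordellCurve d).addX u u ((mordellCurve d).slope u u z z) =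
      9 * u ^ 4 / (4 * z ^ 2) - 2 * u := by
  rw [slope_of_Y_ne rfl (ne_negY_mordellCurve h2 u hz)]
  simp only [addX, negY, mordellCurve]
  rw [show z - (-z - 0 * u - 0) = 2 * z by ring, show (4 : F) * z ^ 2 = (2 * z) ^ 2 by ring]
  field_simp
  ring

lemma sub_ne_sq_of_ne_two_nsmul {E : Type*} [Field E] [Algebra F E]
    (hE : Module.finrank F E = 3) (h2 : (2 : F) ≠ 0) {e : E} (he : e ^ 3 = algebraMap F E d)
    (hd : ∀ q : F, q ^ 3 ≠ d) {x y : F} (hns : (mordellCurve d).Nonsingular x y)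
    (hP : ∀ Q : (mordellCurve d).Point, Point.some x y hns ≠ 2 • Q) (β : E) :
    algebraMap F E x - e ≠ β ^ 2 := by
  intro hβ
  obtain ⟨u, z, hz, huz, hdouble⟩ := exists_halving_of_sub_eq_sq hE he hd hβ
  have hx : x = (mordellCurve d).addX u u ((mordellCurve d).slope u u z z) := by
    rw [mordellCurve_addX_slope_self h2 u hz, hdouble, mul_div_cancel_left₀ _ (by
      simpa [show (4 : F) = 2 ^ 2 by norm_num, hz] using h2)]
    ring
  obtain ⟨Q, hQ⟩ := exists_eq_two_nsmul_of_addX_eq (mordellCurve_nonsingular h2 hz huz)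
    (ne_negY_mordellCurve h2 u hz) hns hx
  exact hP Q hQ

end Mordell

section Ramification

open Polynomial

lemma adjoin_singleton_mul_algebraMap {K L : Type*} [Field K] [CommRing L] [Algebra K L] {κ : K}
    (hκ : κ ≠ 0) (θ : L) :
    Algebra.adjoin K {θ * algebraMap K L κ} = Algebra.adjoin K {θ} := by
  have hθ : κ⁻¹ • (θ * algebraMap K L κ) = θ := by
    rw [mul_comm, ← Algebra.smul_def, inv_smul_smul₀ hκ]
  refine le_antisymm (Algebra.adjoin_singleton_le ?_) (Algebra.adjoin_singleton_le ?_)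
  · exact mul_mem (Algebra.self_mem_adjoin_singleton K θ) (Subalgebra.algebraMap_mem _ κ)
  · simpa only [hθ] using Subalgebra.smul_mem _
      (Algebra.self_mem_adjoin_singleton K (θ * algebraMap K L κ)) κ⁻¹

/-- Up to squares of `K`, the element `a` is a unit at the prime `𝔭` of `A`. As `u ∉ 𝔭` forces
`u ≠ 0`, neither `a` nor `κ` can vanish. -/
def IsUnitModSquares {A K : Type*} [CommRing A] [Field K] [Algebra A K] (𝔭 : Ideal A) (a : K) :
    Prop :=
  ∃ κ : K, ∃ u : A, u ∉ 𝔭 ∧ a * κ ^ 2 = algebraMap A K u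

variable {A K L B : Type*} [CommRing A] [IsDedekindDomain A] [Field K] [Field L] [CommRing B]
  [IsDedekindDomain B] [Algebra A K] [IsFractionRing A K] [Algebra B L]
  [Algebra A B] [Algebra K L] [Algebra A L] [IsScalarTower A K L] [IsScalarTower A B L]
  [Module.IsTorsionFree A B] [FiniteDimensional K L] [Algebra.IsSeparable K L]
  [IsIntegralClosure B A L]

lemma not_dvd_differentIdeal_of_aeval_derivative_notMem {x : B}
    (hgen : Algebra.adjoin K {algebraMap B L x} = ⊤) {f : A[X]} (hf : aeval x f = 0)
    {𝔮 : Ideal B} (hf' : aeval x (derivative f) ∉ 𝔮) : ¬ 𝔮 ∣ differentIdeal A B := by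
  intro hdvd
  obtain ⟨g, rfl⟩ := minpoly.isIntegrallyClosed_dvd
    (IsIntegralClosure.isIntegral_algebra A L |>.isIntegral x) hf
  apply hf'
  simp only [derivative_mul, map_add, map_mul, minpoly.aeval, zero_mul, add_zero]
  exact 𝔮.mul_mem_right _
    (Ideal.dvd_iff_le.mp hdvd (aeval_derivative_mem_differentIdeal A K L x hgen))

attribute [local instance] FractionRing.liftAlgebra

lemma isUnramifiedAt_of_sq_eq_algebraMap {x : B}
    (hgen : Algebra.adjoin K {algebraMap B L x} = ⊤) {u : A} (hx : x ^ 2 = algebraMap A B u)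
    {𝔮 : Ideal B} [𝔮.IsPrime] (h2 : (2 : B) ∉ 𝔮) (hu : u ∉ 𝔮.under A) :
    Algebra.IsUnramifiedAt A 𝔮 := by
  have := IsIntegralClosure.isFractionRing_of_finite_extension A K L B
  have := IsIntegralClosure.finite A K L B
  have : Algebra.IsSeparable (FractionRing A) (FractionRing B) :=
    Algebra.IsSeparable.of_equiv_equiv (FractionRing.algEquiv A K).symm.toRingEquiv
      (FractionRing.algEquiv B L).symm.toRingEquiv
      (by ext; exact IsFractionRing.algEquiv_commutes (FractionRing.algEquiv A K).symm
            (FractionRing.algEquiv B L).symm _)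
  rw [← not_dvd_differentIdeal_iff]
  refine not_dvd_differentIdeal_of_aeval_derivative_notMem (f := X ^ 2 - C u) hgen
    (by simp [hx]) fun hmem ↦ ?_
  have hx𝔮 : x ∉ 𝔮 := fun h ↦ hu (by
    rw [Ideal.mem_comap, ← hx]
    exact 𝔮.pow_mem_of_mem h 2 two_pos)
  have h2x : 2 * x ∈ 𝔮 := by simpa [two_mul, add_mul] using hmem
  exact (‹𝔮.IsPrime›.mem_or_mem h2x).elim h2 hx𝔮

lemma IsUnitModSquares.isUnramifiedAt {𝔮 : Ideal B} [𝔮.IsPrime] {a : K}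
    (ha : IsUnitModSquares (𝔮.under A) a) {θ : L} (hθ : θ ^ 2 = algebraMap K L a)
    (hgen : Algebra.adjoin K {θ} = ⊤) (h2 : (2 : B) ∉ 𝔮) : Algebra.IsUnramifiedAt A 𝔮 := by
  obtain ⟨κ, u, hu, hκu⟩ := ha
  have hκ : κ ≠ 0 := by
    rintro rfl
    rw [zero_pow two_ne_zero, mul_zero, eq_comm, map_eq_zero_iff _ (IsFractionRing.injective A K)]
      at hκu
    exact hu (hκu ▸ zero_mem _)
  have hsq : (θ * algebraMap K L κ) ^ 2 = algebraMap A L u := by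
    rw [mul_pow, hθ, ← map_pow, ← map_mul, hκu, ← IsScalarTower.algebraMap_apply]
  have hint : IsIntegral A (θ * algebraMap K L κ) :=
    .of_pow two_pos (hsq ▸ isIntegral_algebraMap)
  obtain ⟨x, hx⟩ := (IsIntegralClosure.isIntegral_iff (A := B)).mp hint
  refine isUnramifiedAt_of_sq_eq_algebraMap (K := K) (L := L) (x := x) ?_ (u := u) ?_ h2 hu
  · rw [hx, adjoin_singleton_mul_algebraMap hκ, hgen]
  · apply IsIntegralClosure.algebraMap_injective B A L
    rw [map_pow, hx, hsq, IsScalarTower.algebraMap_apply A B L]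

end Ramification

section LocalSquareClass

variable {R K : Type*} [CommRing R] [Field K] [Algebra R K] {𝔭 : Ideal R}

lemma isUnitModSquares_algebraMap_of_notMem {a : R} (ha : a ∉ 𝔭) :
    IsUnitModSquares 𝔭 (algebraMap R K a) :=
  ⟨1, a, ha, by rw [one_pow, mul_one]⟩

variable [IsFractionRing R K]

lemma isUnitModSquares_of_mul_eq_sq {a b t : R} (ht : t ≠ 0) (hab : a * b = t ^ 2) (hb : b ∉ 𝔭) :
    IsUnitModSquares 𝔭 (algebraMap R K a) := by
  have htK : algebraMap R K t ≠ 0 := (map_ne_zero_iff _ (IsFractionRing.injective R K)).mpr ht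
  have habK : algebraMap R K a * algebraMap R K b = algebraMap R K t ^ 2 := by
    rw [← map_mul, hab, map_pow]
  refine ⟨algebraMap R K b / algebraMap R K t, b, hb, ?_⟩
  field_simp
  linear_combination algebraMap R K b * habK

/- `α (ω / p)² = r η - c n` with `η = ω² / p`, which is integral since `η³ = p n²`. -/
lemma isUnitModSquares_sub_mul_of_cube_eq_sq_mul [IsIntegrallyClosed R] [𝔭.IsPrime]
    {ω p n r c : R} (hω : ω ^ 3 = p ^ 2 * n) (hp0 : p ≠ 0) (hp : p ∈ 𝔭) (hn : n ∉ 𝔭) (hc : c ∉ 𝔭) :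
    IsUnitModSquares 𝔭 (algebraMap R K (p * r - c * ω)) := by
  have hpK : algebraMap R K p ≠ 0 := (map_ne_zero_iff _ (IsFractionRing.injective R K)).mpr hp0
  have hωK : algebraMap R K ω ^ 3 = algebraMap R K p ^ 2 * algebraMap R K n := by
    simpa only [map_pow, map_mul] using congrArg (algebraMap R K) hω
  have hcube : (algebraMap R K ω ^ 2 / algebraMap R K p) ^ 3 = algebraMap R K (p * n ^ 2) := by
    rw [map_mul, map_pow]
    field_simp
    linear_combination (algebraMap R K ω ^ 3 + algebraMap R K p ^ 2 * algebraMap R K n) * hωK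
  obtain ⟨η, hη⟩ := IsIntegrallyClosed.exists_algebraMap_eq_of_isIntegral_pow (R := R)
    three_pos (hcube ▸ isIntegral_algebraMap)
  have hη𝔭 : η ∈ 𝔭 := by
    apply ‹𝔭.IsPrime›.mem_of_pow_mem 3
    have : η ^ 3 = p * n ^ 2 := IsFractionRing.injective R K (by rw [map_pow, hη, hcube])
    exact this ▸ 𝔭.mul_mem_right _ hp
  refine ⟨algebraMap R K ω / algebraMap R K p, r * η - c * n, fun hu ↦ ?_, ?_⟩
  · have hcn : c * n ∈ 𝔭 := by
      simpa only [sub_sub_cancel] using 𝔭.sub_mem (𝔭.mul_mem_left r hη𝔭) hu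
    exact (‹𝔭.IsPrime›.mem_or_mem hcn).elim hc hn
  · simp only [map_sub, map_mul, hη]
    field_simp
    linear_combination -algebraMap R K c * hωK

end LocalSquareClass

section Arithmetic

lemma exists_sq_eq_of_sq_eq_div_sq {R K : Type*} [CommRing R] [IsIntegrallyClosed R] [Field K]
    [Algebra R K] [IsFractionRing R K] {r s k : R} (hs : s ≠ 0) {y : K}
    (hy : y ^ 2 = (algebraMap R K r / algebraMap R K s ^ 2) ^ 3 - algebraMap R K k) :
    ∃ t : R, t ^ 2 = r ^ 3 - k * s ^ 6 := by
  have hsK : algebraMap R K s ≠ 0 := (map_ne_zero_iff _ (IsFractionRing.injective R K)).mpr hs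
  have hsq : (y * algebraMap R K s ^ 3) ^ 2 = algebraMap R K (r ^ 3 - k * s ^ 6) := by
    rw [mul_pow, hy]
    simp only [map_sub, map_mul, map_pow]
    field_simp
  obtain ⟨t, ht⟩ := IsIntegrallyClosed.exists_algebraMap_eq_of_isIntegral_pow (R := R)
    two_pos (hsq ▸ isIntegral_algebraMap)
  exact ⟨t, IsFractionRing.injective R K (by rw [map_pow, ht, hsq])⟩

lemma cube_ne_of_cubefree {m : ℤ} (hcf : ∀ d : ℤ, d ^ 3 ∣ m → IsUnit d)
    (hm : (m : ZMod 9) ≠ 1 ∧ (m : ZMod 9) ≠ -1) (k : ℤ) : k ^ 3 ≠ m := by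
  intro hk
  rcases Int.isUnit_iff.mp (hcf k hk.dvd) with rfl | rfl
  · exact hm.1 (by simp [← hk])
  · exact hm.2 (by simp [← hk])

lemma cube_eq_zero_or_one_or_neg_one_zmod_nine (a : ZMod 9) :
    a ^ 3 = 0 ∨ a ^ 3 = 1 ∨ a ^ 3 = -1 := by
  decide +revert

lemma three_dvd_of_nine_dvd_cube_sub {m r c : ℤ} (hm : (m : ZMod 9) ≠ 1 ∧ (m : ZMod 9) ≠ -1)
    (h : 9 ∣ r ^ 3 - m * c ^ 3) : 3 ∣ r := by
  have hmod : (r : ZMod 9) ^ 3 = m * (c : ZMod 9) ^ 3 := by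
    have := (ZMod.intCast_zmod_eq_zero_iff_dvd _ 9).mpr h
    push_cast at this
    exact sub_eq_zero.mp this
  have hr : ((r ^ 3 : ℤ) : ZMod 9) = 0 := by
    push_cast
    rcases cube_eq_zero_or_one_or_neg_one_zmod_nine r with hr | hr | hr <;>
      rcases cube_eq_zero_or_one_or_neg_one_zmod_nine c with hc | hc | hc <;> grind
  have : (9 : ℤ) ∣ r ^ 3 := (ZMod.intCast_zmod_eq_zero_iff_dvd _ 9).mp hr
  exact Int.prime_three.dvd_of_dvd_pow (dvd_trans (by norm_num) this)

variable {m r c t p : ℤ}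

lemma prime_dvd_of_dvd_three_mul_sq (hm : (m : ZMod 9) ≠ 1 ∧ (m : ZMod 9) ≠ -1)
    (ht : t ^ 2 = r ^ 3 - m * c ^ 3) (hp : Prime p) (hpt : p ∣ t) (hpr : p ∣ 3 * r ^ 2) :
    p ∣ r := by
  rcases hp.dvd_or_dvd hpr with hp3 | hpr
  · have hassoc : Associated p 3 := hp.associated_of_dvd Int.prime_three hp3
    have h9 : 3 ^ 2 ∣ r ^ 3 - m * c ^ 3 := ht ▸ pow_dvd_pow_of_dvd (hassoc.dvd'.trans hpt) 2
    exact hp3.trans (three_dvd_of_nine_dvd_cube_sub hm h9)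
  · exact hp.dvd_of_dvd_pow hpr

lemma sq_dvd_of_dvd_of_isCoprime (ht : t ^ 2 = r ^ 3 - m * c ^ 3) (hpt : p ∣ t) (hpr : p ∣ r)
    (hpc : IsCoprime p c) : p ^ 2 ∣ m := by
  have hr3 : p ^ 2 ∣ r ^ 3 := (pow_dvd_pow p (by norm_num)).trans (pow_dvd_pow_of_dvd hpr 3)
  have hmc : p ^ 2 ∣ m * c ^ 3 := by
    rw [show m * c ^ 3 = r ^ 3 - t ^ 2 by rw [ht]; ring]
    exact dvd_sub hr3 (pow_dvd_pow_of_dvd hpt 2)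
  exact hpc.pow.dvd_of_dvd_mul_right hmc

end Arithmetic

section PrimesBelow

variable {R : Type*} [CommRing R] (𝔭 : Ideal R) [𝔭.IsPrime]

lemma exists_prime_forall_intCast_mem_iff_dvd {n : ℤ} (hn : n ≠ 0) (hn𝔭 : (n : R) ∈ 𝔭) :
    ∃ p : ℤ, Prime p ∧ ∀ k : ℤ, (k : R) ∈ 𝔭 ↔ p ∣ k := by
  let I := 𝔭.comap (Int.castRingHom R)
  have hI : I ≠ ⊥ := fun h ↦ hn (by simpa [h] using (show n ∈ I from hn𝔭))
  exact ⟨Submodule.IsPrincipal.generator I, Submodule.IsPrincipal.prime_generator_of_isPrime I hI,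
    fun k ↦ Submodule.IsPrincipal.mem_iff_generator_dvd I⟩

variable [CharZero R] [IsIntegrallyClosed R] {K : Type*} [Field K] [Algebra R K]
  [IsFractionRing R K] {m r c t : ℤ} {ω : R}

lemma isUnitModSquares_sub_mul_of_sq_dvd (hcf : ∀ d : ℤ, d ^ 3 ∣ m → IsUnit d) (hω : ω ^ 3 = m)
    {p : ℤ} (hp : Prime p) (hp𝔭 : ∀ k : ℤ, (k : R) ∈ 𝔭 ↔ p ∣ k) (hpm : p ^ 2 ∣ m) (hpr : p ∣ r)
    (hpc : IsCoprime p c) :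
    IsUnitModSquares 𝔭 (algebraMap R K (r - c * ω)) := by
  obtain ⟨n, rfl⟩ := hpm
  obtain ⟨r', rfl⟩ := hpr
  have hpn : ¬ p ∣ n := fun h ↦
    hp.not_isUnit (hcf p (by rw [pow_succ]; exact mul_dvd_mul_left _ h))
  have hpc' : ¬ p ∣ c := fun h ↦ hp.not_isUnit (hpc.isUnit_of_dvd' dvd_rfl h)
  rw [Int.cast_mul]
  apply isUnitModSquares_sub_mul_of_cube_eq_sq_mul (n := (n : R))
  · exact_mod_cast hω
  · exact Int.cast_ne_zero.mpr hp.ne_zero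
  · exact (hp𝔭 p).mpr dvd_rfl
  · exact (hp𝔭 n).not.mpr hpn
  · exact (hp𝔭 c).not.mpr hpc'

theorem isUnitModSquares_sub_mul_cubeRoot (hcf : ∀ d : ℤ, d ^ 3 ∣ m → IsUnit d)
    (hm : (m : ZMod 9) ≠ 1 ∧ (m : ZMod 9) ≠ -1) (hω : ω ^ 3 = m) (hc : c ≠ 0)
    (hrc : IsCoprime r c) (ht : t ^ 2 = r ^ 3 - m * c ^ 3) :
    IsUnitModSquares 𝔭 (algebraMap R K (r - c * ω)) := by
  by_cases hα : (r - c * ω : R) ∈ 𝔭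
  swap
  · exact isUnitModSquares_algebraMap_of_notMem hα
  have ht0 : t ≠ 0 := by
    rintro rfl
    refine pow_ne_algebraMap_mul_pow (K := ℚ) three_ne_zero (cube_ne_of_cubefree hcf hm)
      (Int.cast_ne_zero.mpr hc) r ?_
    have hrmc : r ^ 3 = m * c ^ 3 := by linear_combination -ht
    rw [eq_intCast]
    exact_mod_cast hrmc
  have hnorm : (r - c * ω) * (r ^ 2 + r * (c * ω) + (c * ω) ^ 2) = (t : R) ^ 2 := by
    have htR : (t : R) ^ 2 = r ^ 3 - m * c ^ 3 := mod_cast congrArg (Int.cast (R := R)) ht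
    linear_combination -(c : R) ^ 3 * hω - htR
  by_cases hβ : (r ^ 2 + r * (c * ω) + (c * ω) ^ 2 : R) ∈ 𝔭
  swap
  · exact isUnitModSquares_of_mul_eq_sq (Int.cast_ne_zero.mpr ht0) hnorm hβ
  have ht𝔭 : (t : R) ∈ 𝔭 :=
    ‹𝔭.IsPrime›.mem_of_pow_mem 2 (hnorm ▸ 𝔭.mul_mem_right _ hα)
  obtain ⟨p, hp, hp𝔭⟩ := exists_prime_forall_intCast_mem_iff_dvd 𝔭 ht0 ht𝔭
  have hp3r : p ∣ 3 * r ^ 2 := by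
    rw [← hp𝔭]
    convert 𝔭.add_mem hβ (𝔭.mul_mem_left (2 * r + c * ω) hα) using 1
    push_cast
    ring
  have hpt : p ∣ t := (hp𝔭 t).mp ht𝔭
  have hpr : p ∣ r := prime_dvd_of_dvd_three_mul_sq hm ht hp hpt hp3r
  have hpc : IsCoprime p c := hrc.of_isCoprime_of_dvd_left hpr
  exact isUnitModSquares_sub_mul_of_sq_dvd 𝔭 hcf hω hp hp𝔭
    (sq_dvd_of_dvd_of_isCoprime ht hpt hpr hpc) hpr hpc

end PrimesBelow

theorem intCast_sub_sq_mul_mul_cubeRoot_ne_sq {m b : ℤ} (hm : ∀ k : ℤ, k ^ 3 ≠ m) (hb : b ≠ 0)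
    {K : Type*} [Field K] [Algebra ℚ K] (hK : Module.finrank ℚ K = 3) {ω : K} (hω : ω ^ 3 = m)
    {r s : ℤ} (hs : s ≠ 0) {y : ℚ} (hns : (Wmb m b).Nonsingular ((r : ℚ) / (s : ℚ) ^ 2) y)
    (hP : ∀ Q : (Wmb m b).Point, WeierstrassCurve.Affine.Point.some _ _ hns ≠ 2 • Q) (β : K) :
    (r - s ^ 2 * b * ω : K) ≠ β ^ 2 := by
  have : CharZero K := algebraRat.charZero K
  have hsK : (s : K) ≠ 0 := Int.cast_ne_zero.mpr hs
  have hbω : (b * ω) ^ 3 = algebraMap ℚ K (m * b ^ 3) := by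
    simp [mul_pow, hω, mul_comm]
  have hcube : ∀ q : ℚ, q ^ 3 ≠ m * b ^ 3 :=
    pow_ne_algebraMap_mul_pow three_ne_zero hm (Int.cast_ne_zero.mpr hb)
  intro hβ
  apply sub_ne_sq_of_ne_two_nsmul hK two_ne_zero hbω hcube hns hP (β / s)
  simp only [map_div₀, map_pow, map_intCast]
  field_simp
  linear_combination hβ

theorem quadratic_extension_unramified_outside_two_general
    (m : ℤ) (hcf : ∀ d : ℤ, d ^ 3 ∣ m → IsUnit d)
    (h9 : (m : ZMod 9) ≠ 1 ∧ (m : ZMod 9) ≠ -1)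
    (K : Type*) [Field K] [NumberField K] (hK : Module.finrank ℚ K = 3)
    (ω : 𝓞 K) (hω : ω ^ 3 = (m : 𝓞 K))
    (b : ℤ) (hb : b ≠ 0)
    (r s : ℤ) (hs : s ≠ 0) (y : ℚ)
    (hns : (Wmb m b).Nonsingular ((r : ℚ) / (s : ℚ) ^ 2) y)
    (hP : ∀ Q : (Wmb m b).Point, WeierstrassCurve.Affine.Point.some _ _ hns ≠ 2 • Q)
    (hrs : IsCoprime r s) (hrb : IsCoprime r b)
    (α : 𝓞 K) (hα : α = (r : 𝓞 K) - (s : 𝓞 K) ^ 2 * (b : 𝓞 K) * ω)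
    (L : Type*) [Field L] [NumberField L] [Algebra K L]
    (θ : L) (hθ : θ ^ 2 = algebraMap K L (α : K))
    (hgen : Algebra.adjoin K {θ} = ⊤) :
    (¬ ∃ β : K, (α : K) = β ^ 2) ∧
    Module.finrank K L = 2 ∧
    ∀ (𝔭 : Ideal (𝓞 K)) (𝔮 : Ideal (𝓞 L)), 𝔭.IsPrime → 𝔭 ≠ ⊥ → 𝔮.IsPrime →
      (2 : 𝓞 K) ∉ 𝔭 → Ideal.comap (algebraMap (𝓞 K) (𝓞 L)) 𝔮 = 𝔭 →
      Ideal.ramificationIdx' 𝔭 𝔮 = 1 := by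
  have hωK : (ω : K) ^ 3 = m := by rw [← map_pow, hω, map_intCast]
  have hsq : ∀ β : K, (α : K) ≠ β ^ 2 := by
    simpa [hα] using intCast_sub_sq_mul_mul_cubeRoot_ne_sq (cube_ne_of_cubefree hcf h9) hb hK hωK
      hs hns hP
  refine ⟨fun ⟨β, hβ⟩ ↦ hsq β hβ,
    finrank_of_pow_eq_of_adjoin_eq_top Nat.prime_two hθ (fun β ↦ (hsq β).symm) hgen, ?_⟩
  rintro _ 𝔮 - h𝔭0 h𝔮 h2 rfl
  obtain ⟨t, ht⟩ := exists_sq_eq_of_sq_eq_div_sq (k := m * b ^ 3) hs (y := y)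
    (by simpa using mordellCurve_equation_iff.mp hns.1)
  have hunit : IsUnitModSquares (𝔮.under (𝓞 K)) (α : K) := by
    simpa [hα] using isUnitModSquares_sub_mul_cubeRoot (K := K) (t := t) (𝔮.under (𝓞 K)) hcf h9 hω
      (mul_ne_zero (pow_ne_zero 2 hs) hb) (hrs.pow_right.mul_right hrb) (by rw [ht]; ring)
  have hunram : Algebra.IsUnramifiedAt (𝓞 K) 𝔮 :=
    hunit.isUnramifiedAt hθ hgen fun h ↦ h2 (by rwa [Ideal.mem_comap, map_ofNat])
  rw [Ideal.ramificationIdx'_eq_ramificationIdx _ _ h𝔭0]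
  exact Ideal.ramificationIdx_eq_one_of_isUnramifiedAt

/-- For cubefree `m ≢ 0, ±1 (mod 9)`, `b ≠ 0`, and a rational point
`P = (r/s², y) ∈ E'(ℚ) \ 2E'(ℚ)` with `gcd(r,s) = gcd(r,b) = 1`, the element
`α = r − s²bω` is not a square in `K^×`, `K(√α)/K` is quadratic, and every nonzero
prime of `O_K` not lying above 2 is unramified in `K(√α)`. -/
theorem quadratic_extension_unramified_outside_two
    (m : ℤ) (hm : ¬ ∃ k : ℤ, k ^ 3 = m) (hcf : ∀ d : ℤ, d ^ 3 ∣ m → IsUnit d)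
    (h9 : (m : ZMod 9) ≠ 0 ∧ (m : ZMod 9) ≠ 1 ∧ (m : ZMod 9) ≠ -1)
    (K : Type*) [Field K] [NumberField K] (hK : Module.finrank ℚ K = 3)
    (ω : 𝓞 K) (hω : ω ^ 3 = (m : 𝓞 K))
    (b : ℤ) (hb : b ≠ 0)
    (P : (Wmb m b).Point) (hP : ∀ Q : (Wmb m b).Point, P ≠ 2 • Q)
    (r s : ℤ) (hs : s ≠ 0) (y : ℚ)
    (hns : (Wmb m b).Nonsingular ((r : ℚ) / (s : ℚ) ^ 2) y)
    (hPeq : P = WeierstrassCurve.Affine.Point.some _ _ hns)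
    (hrs : IsCoprime r s) (hrb : IsCoprime r b)
    (α : 𝓞 K) (hα : α = (r : 𝓞 K) - (s : 𝓞 K) ^ 2 * (b : 𝓞 K) * ω)
    (L : Type*) [Field L] [NumberField L] [Algebra K L]
    (θ : L) (hθ : θ ^ 2 = algebraMap K L (α : K))
    (hgen : Algebra.adjoin K {θ} = ⊤) :
    (¬ ∃ β : K, (α : K) = β ^ 2) ∧
    Module.finrank K L = 2 ∧
    ∀ (𝔭 : Ideal (𝓞 K)) (𝔮 : Ideal (𝓞 L)), 𝔭.IsPrime → 𝔭 ≠ ⊥ → 𝔮.IsPrime →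
      (2 : 𝓞 K) ∉ 𝔭 → Ideal.comap (algebraMap (𝓞 K) (𝓞 L)) 𝔮 = 𝔭 →
      Ideal.ramificationIdx' 𝔭 𝔮 = 1 := by
  subst hPeq
  exact quadratic_extension_unramified_outside_two_general m hcf h9.2 K hK ω hω b hb r s hs y hns hP
    hrs hrb α hα L θ hθ hgen
end
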